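/- Let F=(f₁,f₂) be smooth functions on a neighborhood of 0 in ℝ⁴ with {f₁,f₂}=0, f₁ = a·q₁ + b·q₂ + O(3), f₂ = c·q₁ + d·q₂ + O(3), where ((a,b),(c,d)) is an invertible 2×2 matrix. Then there exist a local symplectomorphism χ of (ℝ⁴,0) tangent to the identity (χ*ω₀=ω₀, χ(0)=0, Dχ(0)=Id), and a smooth local diffeomorphism G̃:(ℝ²,0)→(ℝ²,0) whose derivative at 0 is the matrix ((a,b),(c,d)), such that F∘χ − G̃∘(q₁,q₂) is flat at the origin. -/

import Mathlib

open Filter Topology Set MeasureTheory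

noncomputable section

/-- ℝ⁴ with coordinates `(x₁, ξ₁, x₂, ξ₂) = (p 0, p 1, p 2, p 3)`. -/
abbrev E4 : Type := Fin 4 → ℝ

/-- ℝ². -/
abbrev E2 : Type := Fin 2 → ℝ

/-- The focus-focus quadratic form `q₁ = x₁ξ₁ + x₂ξ₂`. -/
def q1 (p : E4) : ℝ := p 0 * p 1 + p 2 * p 3

/-- The focus-focus quadratic form `q₂ = x₁ξ₂ − x₂ξ₁`. -/
def q2 (p : E4) : ℝ := p 0 * p 3 - p 2 * p 1

/-- The map `q = (q₁, q₂) : ℝ⁴ → ℝ²`. -/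
def qmap (p : E4) : E2 := ![q1 p, q2 p]

/-- Partial derivative of `f` in the `i`-th coordinate direction. -/
def pd (i : Fin 4) (f : E4 → ℝ) (p : E4) : ℝ := fderiv ℝ f p (Pi.single i 1)

/-- Poisson bracket for the canonical symplectic form `ω₀ = dξ₁∧dx₁ + dξ₂∧dx₂`. -/
def pois (f g : E4 → ℝ) (p : E4) : ℝ :=
  pd 1 f p * pd 0 g p - pd 0 f p * pd 1 g p + pd 3 f p * pd 2 g p - pd 2 f p * pd 3 g p

/-- The canonical symplectic form `ω₀` as a bilinear form on ℝ⁴. -/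
def omega0 (u v : E4) : ℝ := u 1 * v 0 - u 0 * v 1 + u 3 * v 2 - u 2 * v 3

/-- A map is flat at a point if all its iterated derivatives vanish there. -/
def flatAt {E F : Type*} [NormedAddCommGroup E] [NormedSpace ℝ E]
    [NormedAddCommGroup F] [NormedSpace ℝ F] (f : E → F) (x : E) : Prop :=
  ∀ n : ℕ, iteratedFDeriv ℝ n f x = 0

/-!
After a linear change of the target the quadratic part of `F` is `q = (q₁, q₂)`. A symplectic map
tangent to the identity is given by a generating function `σ = O(3)`; pulled back to the mixed
variables, the equation `F ∘ χ = G ∘ q` reads `F (x + ∂σ/∂ξ, ξ) = G (q (x, ξ + ∂σ/∂x))` and contains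
no inverse map, so it can be solved degree by degree. The error of degree `N` is corrected by a
solution `(s, g)` of the homological equation `r = g ∘ q + {q, s}`. The operators `{q₁, ·}` and
`{q₂, ·}` are diagonal in the complex coordinates `x₁ ± ix₂`, `ξ₁ ± iξ₂`, with joint kernel the
polynomials in `q`; the equation is therefore solvable once `{q₁, r₂} = {q₂, r₁}`, and this is the
leading part of the relation `{f₁, f₂} = 0`. Borel's lemma turns the resulting formal series `σ` and
`G` into smooth functions.
-/

open Asymptotics
open scoped ContDiff

section VanishingOrder

variable {E F G : Type*} [NormedAddCommGroup E] [NormedAddCommGroup F] [NormedAddCommGroup G]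

/-- `g` vanishes to order `N` at the origin, the `O(N)` of the theory of normal forms:
`g x = O(‖x‖ ^ N)` as `x → 0`. For smooth `g` it means that the derivatives of order less than `N`
vanish at `0`. -/
def VanishesToOrder (N : ℕ) (g : E → F) : Prop := g =O[𝓝 0] fun x => ‖x‖ ^ N

namespace VanishesToOrder

variable {g h : E → F} {M N : ℕ}

theorem mono (hg : VanishesToOrder N g) (hMN : M ≤ N) : VanishesToOrder M g := by
  refine hg.trans (IsBigO.of_bound 1 ?_)
  filter_upwards [Metric.ball_mem_nhds (0 : E) one_pos] with x hx
  rw [mem_ball_zero_iff] at hx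
  simpa only [norm_pow, norm_norm, one_mul] using pow_le_pow_of_le_one (norm_nonneg x) hx.le hMN

theorem congr' (hg : VanishesToOrder N g) (hgh : g =ᶠ[𝓝 0] h) : VanishesToOrder N h :=
  IsBigO.congr' hg hgh EventuallyEq.rfl

theorem congr (hg : VanishesToOrder N g) (hgh : ∀ x, g x = h x) : VanishesToOrder N h :=
  hg.congr' (Eventually.of_forall hgh)

theorem add (hg : VanishesToOrder N g) (hh : VanishesToOrder N h) :
    VanishesToOrder N fun x => g x + h x :=
  IsBigO.add hg hh

theorem sub (hg : VanishesToOrder N g) (hh : VanishesToOrder N h) :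
    VanishesToOrder N fun x => g x - h x :=
  IsBigO.sub hg hh

theorem neg (hg : VanishesToOrder N g) : VanishesToOrder N fun x => -g x :=
  IsBigO.neg_left hg

theorem mul {g h : E → ℝ} (hg : VanishesToOrder M g) (hh : VanishesToOrder N h) :
    VanishesToOrder (M + N) fun x => g x * h x := by
  simpa only [VanishesToOrder, pow_add] using IsBigO.mul hg hh

theorem apply_eq_zero (hg : VanishesToOrder N g) (hN : N ≠ 0) : g 0 = 0 :=
  (IsBigO.eq_zero_imp hg).self_of_nhds (by simp [hN])

theorem tendsto (hg : VanishesToOrder N g) (hN : N ≠ 0) : Tendsto g (𝓝 0) (𝓝 0) := by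
  refine hg.trans_tendsto ?_
  have hc : Continuous fun x : E => ‖x‖ ^ N := by fun_prop
  simpa [hN] using hc.tendsto 0

theorem comp {A : G → E} (hg : VanishesToOrder N g) (hA : VanishesToOrder M A) (hM : M ≠ 0) :
    VanishesToOrder (M * N) fun x => g (A x) := by
  refine (hg.comp_tendsto (hA.tendsto hM)).trans ?_
  simpa only [pow_mul, Function.comp_def] using hA.norm_left.pow N

theorem comp_one {A : G → E} (hg : VanishesToOrder N g) (hA : VanishesToOrder 1 A) :
    VanishesToOrder N fun x => g (A x) := by
  simpa only [one_mul] using hg.comp hA one_ne_zero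

end VanishesToOrder

theorem VanishesToOrder.clm_comp [NormedSpace ℝ F] [NormedSpace ℝ G] {g : E → F} {N : ℕ}
    (L : F →L[ℝ] G) (hg : VanishesToOrder N g) : VanishesToOrder N fun x => L (g x) :=
  (L.isBigO_comp g _).trans hg

theorem vanishesToOrder_id : VanishesToOrder 1 fun x : E => x := by
  simpa only [VanishesToOrder, pow_one] using (isBigO_refl (fun x : E => x) (𝓝 0)).norm_right

theorem vanishesToOrder_zero_of_continuous {g : E → F} (hg : Continuous g) :
    VanishesToOrder 0 g := by
  simpa only [VanishesToOrder, pow_zero] using (hg.tendsto 0).isBigO_one ℝ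

theorem vanishesToOrder_pi {ι : Type*} [Fintype ι] {F : ι → Type*}
    [∀ i, NormedAddCommGroup (F i)] {g : E → ∀ i, F i} {N : ℕ} :
    VanishesToOrder N g ↔ ∀ i, VanishesToOrder N fun x => g x i :=
  isBigO_pi

end VanishingOrder

section Homogeneous

variable {E F : Type*} [NormedAddCommGroup E] [NormedSpace ℝ E] [NormedAddCommGroup F]
  [NormedSpace ℝ F]

/-- Positive homogeneity of degree `k`, extended to all real scalars. -/
def HomogeneousOfDegree (k : ℕ) (P : E → F) : Prop := ∀ (t : ℝ) x, P (t • x) = t ^ k • P x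

/-- Blow-up at the origin, uniformly on a neighbourhood of every point. -/
theorem VanishesToOrder.tendsto_inv_pow_smul {g : E → F} {k : ℕ} (hg : VanishesToOrder (k + 1) g)
    (y : E) : Tendsto (fun p : ℝ × E => (p.1 ^ k)⁻¹ • g (p.1 • p.2)) (𝓝[≠] 0 ×ˢ 𝓝 y) (𝓝 0) := by
  have hfst : Tendsto (fun p : ℝ × E => p.1) (𝓝[≠] 0 ×ˢ 𝓝 y) (𝓝 0) :=
    tendsto_fst.mono_right nhdsWithin_le_nhds
  have hsnd : (fun p : ℝ × E => p.2) =O[𝓝[≠] 0 ×ˢ 𝓝 y] fun _ => (1 : ℝ) :=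
    tendsto_snd.isBigO_one ℝ
  have hsmul : Tendsto (fun p : ℝ × E => p.1 • p.2) (𝓝[≠] 0 ×ˢ 𝓝 y) (𝓝 0) := by
    simpa only [zero_smul] using hfst.smul (tendsto_snd (f := 𝓝[≠] (0 : ℝ)) (g := 𝓝 y))
  have hnorm : (fun p : ℝ × E => ‖p.1 • p.2‖) =O[𝓝[≠] 0 ×ˢ 𝓝 y] fun p => p.1 := by
    simpa only [smul_eq_mul, mul_one] using
      ((isBigO_refl (fun p : ℝ × E => p.1) _).smul hsnd).norm_left
  have hbound := (isBigO_refl (fun p : ℝ × E => (p.1 ^ k)⁻¹) (𝓝[≠] 0 ×ˢ 𝓝 y)).smul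
    ((hg.comp_tendsto hsmul).trans (hnorm.pow (k + 1)))
  refine (hbound.congr' EventuallyEq.rfl ?_).trans_tendsto hfst
  filter_upwards [tendsto_fst.eventually self_mem_nhdsWithin] with p (hp : p.1 ≠ 0)
  rw [smul_eq_mul, pow_succ, inv_mul_cancel_left₀ (pow_ne_zero k hp)]

namespace HomogeneousOfDegree

variable {P : E → F} {k : ℕ}

theorem vanishesToOrder (hP : HomogeneousOfDegree k P) (hc : Continuous P) :
    VanishesToOrder k P := by
  obtain ⟨C, hC⟩ := (hc.tendsto 0).isBigO_one ℝ |>.bound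
  obtain ⟨δ, hδ, hb⟩ := Metric.eventually_nhds_iff.1 hC
  simp only [dist_zero_right, norm_one, mul_one] at hb
  refine IsBigO.of_bound (C * (2 / δ) ^ k) (Eventually.of_forall fun x => ?_)
  rw [norm_pow, norm_norm]
  rcases eq_or_ne x 0 with rfl | hx
  · have hP0 := hP 0 0
    rcases eq_or_ne k 0 with rfl | hk
    · simpa using hb (y := (0 : E)) (by simpa using hδ)
    · simp_all
  · have : 0 < ‖x‖ := norm_pos_iff.2 hx
    have hsmall : ‖P ((δ / (2 * ‖x‖)) • x)‖ ≤ C := hb <| by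
      rw [norm_smul, Real.norm_of_nonneg (by positivity)]
      calc δ / (2 * ‖x‖) * ‖x‖ = δ / 2 := by field_simp
        _ < δ := half_lt_self hδ
    calc ‖P x‖ = ‖P ((2 / δ * ‖x‖) • (δ / (2 * ‖x‖)) • x)‖ := by
          rw [smul_smul, show 2 / δ * ‖x‖ * (δ / (2 * ‖x‖)) = 1 by field_simp, one_smul]
      _ = (2 / δ * ‖x‖) ^ k * ‖P ((δ / (2 * ‖x‖)) • x)‖ := by
          rw [hP, norm_smul, Real.norm_of_nonneg (by positivity)]
      _ ≤ (2 / δ * ‖x‖) ^ k * C := by gcongr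
      _ = C * (2 / δ) ^ k * ‖x‖ ^ k := by rw [mul_pow]; ring

theorem eq_zero_of_vanishesToOrder_succ (hP : HomogeneousOfDegree k P)
    (h : VanishesToOrder (k + 1) P) (x : E) : P x = 0 := by
  have hlim := (h.tendsto_inv_pow_smul x).comp
    (tendsto_id.prodMk (tendsto_const_nhds (x := x) (f := 𝓝[≠] (0 : ℝ))))
  refine tendsto_nhds_unique (tendsto_const_nhds.congr' ?_) hlim
  filter_upwards [self_mem_nhdsWithin] with t (ht : t ≠ 0)
  simp only [Function.comp_apply, id_eq, hP t x, inv_smul_smul₀ (pow_ne_zero k ht)]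

end HomogeneousOfDegree

end Homogeneous

section Taylor

variable {E F : Type*} [NormedAddCommGroup E] [NormedSpace ℝ E] [NormedAddCommGroup F]
  [NormedSpace ℝ F]

/-- The degree `k` term `D ^ k g (0) (x, …, x) / k!` of the Taylor series of `g` at the origin. -/
def taylorTerm (g : E → F) (k : ℕ) (x : E) : F :=
  (k.factorial : ℝ)⁻¹ • iteratedFDeriv ℝ k g 0 fun _ => x

theorem homogeneousOfDegree_taylorTerm (g : E → F) (k : ℕ) :
    HomogeneousOfDegree k (taylorTerm g k) := fun t x => by
  have h := (iteratedFDeriv ℝ k g 0).map_smul_univ (fun _ => t) fun _ => x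
  rw [Fin.prod_const] at h
  rw [taylorTerm, h, smul_comm, ← taylorTerm]

theorem contDiff_taylorTerm (g : E → F) (k : ℕ) : ContDiff ℝ ∞ (taylorTerm g k) :=
  ((iteratedFDeriv ℝ k g 0).contDiff.comp
    (contDiff_pi.2 fun _ : Fin k => contDiff_id)).const_smul _

variable [CompleteSpace F] {g : E → F}

theorem vanishesToOrder_sub_sum_taylorTerm (hg : ContDiff ℝ ∞ g) (n : ℕ) :
    VanishesToOrder (n + 1) fun y => g y - ∑ k ∈ Finset.range (n + 1), taylorTerm g k y := by
  have hgn : ContDiff ℝ (n + 1 : ℕ) g := hg.of_le (by exact_mod_cast le_top)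
  obtain ⟨C, hC⟩ := ((hgn.continuous_iteratedFDeriv le_rfl).tendsto 0).isBigO_one ℝ |>.bound
  obtain ⟨δ, hδ, hC⟩ := Metric.eventually_nhds_iff.1 hC
  simp only [dist_zero_right, norm_one, mul_one] at hC
  refine IsBigO.of_bound ((n.factorial : ℝ)⁻¹ * C) ?_
  filter_upwards [Metric.ball_mem_nhds (0 : E) hδ] with y hy
  rw [mem_ball_zero_iff] at hy
  have hT := map_add_eq_sum_add_integral_iteratedFDeriv (x := 0) (y := y)
    fun _ _ => hgn.contDiffAt
  simp only [zero_add] at hT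
  rw [hT]
  simp only [taylorTerm, add_sub_cancel_left]
  rw [norm_smul, Real.norm_of_nonneg (by positivity), mul_assoc, norm_pow, norm_norm]
  gcongr
  refine (intervalIntegral.norm_integral_le_of_norm_le_const fun t ht => ?_).trans_eq
    (by rw [sub_zero, abs_one, mul_one])
  rw [uIoc_of_le zero_le_one] at ht
  have hpow : ‖(1 - t) ^ n‖ ≤ 1 := by
    rw [norm_pow, Real.norm_of_nonneg (by linarith [ht.2])]
    exact pow_le_one₀ (by linarith [ht.2]) (by linarith [ht.1])
  have hty : ‖t • y‖ < δ := by
    rw [norm_smul, Real.norm_of_nonneg ht.1.le]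
    exact (mul_le_of_le_one_left (norm_nonneg y) ht.2).trans_lt hy
  calc ‖(1 - t) ^ n • iteratedFDeriv ℝ (n + 1) g (t • y) fun _ => y‖
      ≤ 1 * (C * ∏ _ : Fin (n + 1), ‖y‖) := by
        rw [norm_smul]
        exact mul_le_mul hpow (ContinuousMultilinearMap.le_of_opNorm_le (hC hty) _)
          (norm_nonneg _) zero_le_one
    _ = C * ‖y‖ ^ (n + 1) := by rw [one_mul, Fin.prod_const]

theorem vanishesToOrder_of_iteratedFDeriv_eq_zero (hg : ContDiff ℝ ∞ g) {N : ℕ}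
    (h : ∀ k < N, iteratedFDeriv ℝ k g 0 = 0) : VanishesToOrder N g := by
  rcases N with _ | n
  · exact vanishesToOrder_zero_of_continuous hg.continuous
  refine (vanishesToOrder_sub_sum_taylorTerm hg n).congr fun y => ?_
  rw [Finset.sum_eq_zero, sub_zero]
  intro k hk
  simp only [taylorTerm, h k (Finset.mem_range.1 hk), zero_apply, smul_zero]

theorem VanishesToOrder.taylorTerm_eq_zero {N : ℕ} (h : VanishesToOrder N g) (hg : ContDiff ℝ ∞ g)
    (k : ℕ) (hk : k < N) (x : E) : taylorTerm g k x = 0 := by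
  induction k using Nat.strong_induction_on generalizing x with
  | _ k ih =>
    refine (homogeneousOfDegree_taylorTerm g k).eq_zero_of_vanishesToOrder_succ ?_ x
    refine ((h.mono hk).sub (vanishesToOrder_sub_sum_taylorTerm hg k)).congr fun y => ?_
    rw [sub_sub_cancel, Finset.sum_range_succ, Finset.sum_eq_zero, zero_add]
    intro j hj
    have hjk := Finset.mem_range.1 hj
    exact ih j hjk (hjk.trans hk) y

theorem VanishesToOrder.sub_taylorTerm {N : ℕ} (h : VanishesToOrder N g) (hg : ContDiff ℝ ∞ g) :
    VanishesToOrder (N + 1) fun x => g x - taylorTerm g N x := by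
  refine (vanishesToOrder_sub_sum_taylorTerm hg N).congr fun y => ?_
  rw [Finset.sum_range_succ, Finset.sum_eq_zero, zero_add]
  exact fun k hk => h.taylorTerm_eq_zero hg k (Finset.mem_range.1 hk) y

/-- The blow-ups `t⁻ᵏ⁻¹ g (t x)` tend to `0` while their derivatives tend to the leading term
of `Dg`, locally uniformly; hence that term is the derivative of `0`. -/
theorem VanishesToOrder.taylorTerm_fderiv_eq_zero {k : ℕ} (h : VanishesToOrder (k + 2) g)
    (hg : ContDiff ℝ ∞ g) (hD : VanishesToOrder k (fderiv ℝ g)) (x : E) :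
    taylorTerm (fderiv ℝ g) k x = 0 := by
  have hg' : ContDiff ℝ ∞ (fderiv ℝ g) := hg.fderiv_right (by simp)
  refine HasFDerivAt.unique (f := fun _ : E => (0 : F)) (x := x) ?_ (hasFDerivAt_const 0 x)
  refine hasFDerivAt_of_tendstoUniformlyOnFilter (l := 𝓝[≠] (0 : ℝ))
    (f := fun t z => (t ^ (k + 1))⁻¹ • g (t • z))
    (f' := fun t z => (t ^ k)⁻¹ • fderiv ℝ g (t • z)) ?_ ?_ ?_
  · have hlim := (hD.sub_taylorTerm hg').tendsto_inv_pow_smul x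
    rw [Metric.tendstoUniformlyOnFilter_iff]
    intro ε hε
    filter_upwards [Metric.tendsto_nhds.1 hlim ε hε,
      tendsto_fst.eventually self_mem_nhdsWithin] with p hp (hp0 : p.1 ≠ 0)
    rwa [homogeneousOfDegree_taylorTerm, smul_sub, inv_smul_smul₀ (pow_ne_zero k hp0),
      dist_zero_right, ← dist_eq_norm, dist_comm] at hp
  · filter_upwards [tendsto_fst.eventually self_mem_nhdsWithin] with p (hp : p.1 ≠ 0)
    have hcomp := ((hg.differentiable (by simp) (p.1 • p.2)).hasFDerivAt.comp p.2
      ((hasFDerivAt_id p.2).const_smul p.1)).const_smul ((p.1 ^ (k + 1))⁻¹)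
    refine hcomp.congr_fderiv ?_
    ext v
    simp only [smul_apply, ContinuousLinearMap.comp_apply,
      ContinuousLinearMap.id_apply, map_smul, smul_smul, pow_succ, mul_inv,
      inv_mul_cancel_right₀ hp]
  · filter_upwards [] with y
    exact (h.tendsto_inv_pow_smul y).comp (tendsto_id.prodMk tendsto_const_nhds)

protected theorem VanishesToOrder.fderiv {N : ℕ} (h : VanishesToOrder (N + 1) g)
    (hg : ContDiff ℝ ∞ g) :
    VanishesToOrder N (fderiv ℝ g) := by
  have hg' : ContDiff ℝ ∞ (fderiv ℝ g) := hg.fderiv_right (by simp)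
  induction N with
  | zero => exact vanishesToOrder_zero_of_continuous hg'.continuous
  | succ k ih =>
    have hD := ih (h.mono (Nat.le_succ _))
    refine (hD.sub_taylorTerm hg').congr fun x => ?_
    rw [h.taylorTerm_fderiv_eq_zero hg hD, sub_zero]

protected theorem VanishesToOrder.iteratedFDeriv {N : ℕ} (h : VanishesToOrder N g)
    (hg : ContDiff ℝ ∞ g) (k : ℕ) : VanishesToOrder (N - k) (iteratedFDeriv ℝ k g) := by
  induction k with
  | zero =>
    refine IsBigO.congr_left h.norm_left (fun x => (norm_iteratedFDeriv_zero).symm) |>.of_norm_left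
  | succ k ih =>
    rcases Nat.eq_zero_or_pos (N - k) with h0 | h0
    · rw [show N - (k + 1) = 0 by omega]
      exact vanishesToOrder_zero_of_continuous (hg.continuous_iteratedFDeriv (mod_cast le_top))
    have hk := VanishesToOrder.fderiv (N := N - (k + 1)) (by convert ih using 1; omega)
      (hg.iteratedFDeriv_right (mod_cast le_top))
    exact (hk.norm_left.congr_left fun x => norm_fderiv_iteratedFDeriv).of_norm_left

theorem VanishesToOrder.iteratedFDeriv_eq_zero {N k : ℕ} (h : VanishesToOrder N g)
    (hg : ContDiff ℝ ∞ g) (hk : k < N) : iteratedFDeriv ℝ k g 0 = 0 :=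
  (h.iteratedFDeriv hg k).apply_eq_zero (Nat.sub_ne_zero_of_lt hk)

end Taylor

section MeanValue

variable {E F G : Type*} [NormedAddCommGroup E] [NormedSpace ℝ E] [NormedAddCommGroup F]
  [NormedSpace ℝ F] [NormedAddCommGroup G]

theorem VanishesToOrder.comp_sub_comp {φ : E → F} (hφ : Differentiable ℝ φ) {m k : ℕ}
    (hD : VanishesToOrder m (fderiv ℝ φ)) {A B : G → E} (hA : VanishesToOrder 1 A)
    (hB : VanishesToOrder 1 B) (hAB : VanishesToOrder k fun x => A x - B x) :
    VanishesToOrder (m + k) fun x => φ (A x) - φ (B x) := by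
  obtain ⟨C, hC, hbC⟩ := hD.exists_nonneg
  obtain ⟨a, ha, hba⟩ := hA.exists_nonneg
  obtain ⟨b, hb, hbb⟩ := hB.exists_nonneg
  obtain ⟨e, _, hbe⟩ := hAB.exists_nonneg
  obtain ⟨δ, hδ, hball⟩ := Metric.eventually_nhds_iff_ball.1 hbC.bound
  have hsmall : ∀ᶠ x : G in 𝓝 0, (a + b) * ‖x‖ < δ := by
    have hc : Continuous fun x : G => (a + b) * ‖x‖ := by fun_prop
    exact hc.continuousAt.eventually_lt continuousAt_const (by simpa using hδ)
  refine IsBigO.of_bound (C * (a + b) ^ m * e) ?_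
  filter_upwards [hba.bound, hbb.bound, hbe.bound, hsmall] with x hAx hBx hABx hx
  simp only [pow_one, norm_norm, norm_pow] at hAx hBx hABx ⊢
  set r := (a + b) * ‖x‖ with hr
  have hax : 0 ≤ a * ‖x‖ := by positivity
  have hbx : 0 ≤ b * ‖x‖ := by positivity
  have hA' : A x ∈ Metric.closedBall (0 : E) r := by
    rw [mem_closedBall_zero_iff]; linarith
  have hB' : B x ∈ Metric.closedBall (0 : E) r := by
    rw [mem_closedBall_zero_iff]; linarith
  have hderiv : ∀ y ∈ Metric.closedBall (0 : E) r, ‖fderiv ℝ φ y‖ ≤ C * r ^ m := by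
    intro y hy
    rw [mem_closedBall_zero_iff] at hy
    have hbound := hball y (mem_ball_zero_iff.2 (hy.trans_lt hx))
    rw [norm_pow, norm_norm] at hbound
    exact hbound.trans (by gcongr)
  calc ‖φ (A x) - φ (B x)‖ ≤ C * r ^ m * ‖A x - B x‖ :=
        (convex_closedBall (0 : E) r).norm_image_sub_le_of_norm_fderiv_le
          (fun y _ => hφ y) hderiv hB' hA'
    _ ≤ C * r ^ m * (e * ‖x‖ ^ k) := by gcongr
    _ = C * (a + b) ^ m * e * ‖x‖ ^ (m + k) := by rw [hr, mul_pow]; ring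

end MeanValue

section Borel

variable {E F : Type*} [NormedAddCommGroup E] [NormedSpace ℝ E] [NormedAddCommGroup F]
  [NormedSpace ℝ F]

theorem exists_forall_norm_iteratedFDeriv_le {ψ : E → F} (hψ : ContDiff ℝ ∞ ψ)
    (hc : HasCompactSupport ψ) (k : ℕ) :
    ∃ C, 0 ≤ C ∧ ∀ j < k, ∀ x, ‖iteratedFDeriv ℝ j ψ x‖ ≤ C := by
  have hbound (j : ℕ) : ∃ C, ∀ x, ‖iteratedFDeriv ℝ j ψ x‖ ≤ C :=
    (hψ.continuous_iteratedFDeriv (mod_cast le_top)).bounded_above_of_compact_support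
      (hc.iteratedFDeriv j)
  choose C hC using hbound
  have hC0 (j : ℕ) : 0 ≤ C j := (norm_nonneg _).trans (hC j 0)
  refine ⟨∑ j ∈ Finset.range k, C j, Finset.sum_nonneg fun j _ => hC0 j, fun j hj x => ?_⟩
  exact (hC j x).trans (Finset.single_le_sum (fun i _ => hC0 i) (Finset.mem_range.2 hj))

theorem norm_iteratedFDeriv_inv_pow_smul_comp_smul_le {ψ : E → F} (hψ : ContDiff ℝ ∞ ψ) {j k : ℕ}
    (hjk : j < k) {C l : ℝ} (hC : ∀ x, ‖iteratedFDeriv ℝ j ψ x‖ ≤ C) (hl : 1 ≤ l) (x : E) :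
    ‖iteratedFDeriv ℝ j (fun x => (l ^ k)⁻¹ • ψ (l • x)) x‖ ≤ C / l := by
  have hl0 : 0 < l := zero_lt_one.trans_le hl
  have hψj : ContDiff ℝ j ψ := hψ.of_le (mod_cast le_top)
  have hcomp : ContDiff ℝ j fun x => ψ (l • x) := hψj.comp (contDiff_const_smul l)
  have : 0 ≤ C := (norm_nonneg _).trans (hC 0)
  rw [iteratedFDeriv_const_smul_apply' hcomp.contDiffAt, iteratedFDeriv_comp_const_smul l hψj,
    norm_smul, norm_smul, norm_inv, norm_pow, norm_pow, Real.norm_of_nonneg hl0.le]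
  calc (l ^ k)⁻¹ * (l ^ j * ‖iteratedFDeriv ℝ j ψ (l • x)‖)
      ≤ (l ^ (j + 1))⁻¹ * (l ^ j * C) := by
        gcongr
        · exact hjk
        · exact hC _
    _ = C / l := by rw [pow_succ]; field_simp

theorem vanishesToOrder_tsum [CompleteSpace F] {h : ℕ → E → F} {u : ℕ → ℝ} (hu : Summable u) {M : ℕ}
    (hs : ∀ k, ContDiff ℝ ∞ (h k)) (hsum : ContDiff ℝ ∞ fun x => ∑' k, h k x)
    (hb : ∀ k, ∀ j < M, ∀ x, ‖iteratedFDeriv ℝ j (h k) x‖ ≤ u k)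
    (hO : ∀ k, VanishesToOrder M (h k)) : VanishesToOrder M fun x => ∑' k, h k x := by
  refine vanishesToOrder_of_iteratedFDeriv_eq_zero hsum fun j hj => ?_
  rw [iteratedFDeriv_tsum_apply (N := j) (v := fun _ => u) (fun k => (hs k).of_le (mod_cast le_top))
    (fun _ _ => hu) (fun i k x hi => hb k i ((Nat.cast_le.1 hi).trans_lt hj) x) le_rfl]
  exact (tsum_congr fun k => (hO k).iteratedFDeriv_eq_zero (hs k) hj).trans tsum_zero

variable [FiniteDimensional ℝ E]

/-- Cut `P` off by a bump function and rescale; as `P` is homogeneous, the rescaling does not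
change it near the origin, while it makes the derivatives of order less than `k` small. -/
theorem HomogeneousOfDegree.exists_contDiff_eventuallyEq_norm_iteratedFDeriv_le {P : E → F} {k : ℕ}
    (hP : HomogeneousOfDegree k P) (hs : ContDiff ℝ ∞ P) {ε : ℝ} (hε : 0 < ε) :
    ∃ h : E → F, ContDiff ℝ ∞ h ∧ h =ᶠ[𝓝 0] P ∧
      ∀ j < k, ∀ x, ‖iteratedFDeriv ℝ j h x‖ ≤ ε := by
  let φ : ContDiffBump (0 : E) := ⟨1, 2, one_pos, one_lt_two⟩
  have hψ : ContDiff ℝ ∞ fun x => φ x • P x := φ.contDiff.smul hs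
  obtain ⟨C, hC0, hC⟩ := exists_forall_norm_iteratedFDeriv_le hψ φ.hasCompactSupport.smul_right k
  set l : ℝ := 1 + C / ε with hl
  have hl1 : 1 ≤ l := le_add_of_nonneg_right (by positivity)
  have hl0 : 0 < l := zero_lt_one.trans_le hl1
  refine ⟨fun x => (l ^ k)⁻¹ • φ (l • x) • P (l • x),
    (hψ.comp (contDiff_const_smul l)).const_smul _, ?_, fun j hj x => ?_⟩
  · have hlim : Tendsto (fun x : E => l • x) (𝓝 0) (𝓝 0) := by
      simpa only [smul_zero] using (continuous_const_smul l).tendsto (0 : E)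
    filter_upwards [hlim.eventually φ.eventuallyEq_one] with x hx
    rw [hx, Pi.one_apply, one_smul, hP, inv_smul_smul₀ (pow_pos hl0 k).ne']
  · refine (norm_iteratedFDeriv_inv_pow_smul_comp_smul_le hψ hj (hC j hj) hl1 x).trans ?_
    rw [div_le_iff₀ hl0, hl, mul_add, mul_one, mul_div_cancel₀ C hε.ne']
    exact le_add_of_nonneg_left hε.le

/-- **Borel's lemma** for a series of homogeneous terms whose degrees tend to infinity. -/
theorem exists_contDiff_vanishesToOrder_sub_sum [CompleteSpace F] {P : ℕ → E → F} {d : ℕ → ℕ}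
    (hs : ∀ k, ContDiff ℝ ∞ (P k)) (hP : ∀ k, HomogeneousOfDegree (d k) (P k))
    (hd : Tendsto d atTop atTop) :
    ∃ f : E → F, ContDiff ℝ ∞ f ∧ ∀ n M, (∀ k, n ≤ k → M ≤ d k) →
      VanishesToOrder M fun x => f x - ∑ k ∈ Finset.range n, P k x := by
  choose h hsm heq hle using fun k =>
    (hP k).exists_contDiff_eventuallyEq_norm_iteratedFDeriv_le (hs k) (ε := (1 / 2) ^ k)
      (by positivity)
  have hgeom : Summable fun k : ℕ => (1 / 2 : ℝ) ^ k := summable_geometric_two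
  have hf : ContDiff ℝ ∞ fun x => ∑' k, h k x := by
    refine contDiff_tsum_of_eventually hsm (fun _ _ => hgeom) fun j _ => ?_
    rw [Nat.cofinite_eq_atTop]
    filter_upwards [hd.eventually_gt_atTop j] with k hk using hle k j hk
  refine ⟨_, hf, fun n M hM => ?_⟩
  rcases Nat.eq_zero_or_pos M with rfl | _
  · exact vanishesToOrder_zero_of_continuous
      (hf.sub (ContDiff.sum fun k _ => hs k)).continuous
  have hsummable (x : E) : Summable fun k => h k x := by
    refine hgeom.of_norm_bounded_eventually_nat ?_
    filter_upwards [hd.eventually_gt_atTop 0] with k hk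
    simpa only [norm_iteratedFDeriv_zero] using hle k 0 hk x
  have htail (x : E) : ∑' k, h (k + n) x = ∑' k, h k x - ∑ k ∈ Finset.range n, h k x := by
    rw [← (hsummable x).sum_add_tsum_nat_add n, add_sub_cancel_left]
  have htail_smooth : ContDiff ℝ ∞ fun x => ∑' k, h (k + n) x := by
    simpa only [htail] using hf.sub (ContDiff.sum fun k _ => hsm k)
  have hO (k : ℕ) : VanishesToOrder M (h (k + n)) :=
    (((hP _).vanishesToOrder (hs _).continuous).mono (hM _ (Nat.le_add_left n k))).congr'
      (heq _).symm
  refine (vanishesToOrder_tsum ((summable_nat_add_iff n).2 hgeom) (fun k => hsm _) htail_smooth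
    (fun k j hj => hle _ j (hj.trans_le (hM _ (Nat.le_add_left n k)))) hO).congr' ?_
  filter_upwards [(eventually_all_finset (Finset.range n)).2 fun k _ => heq k] with x hx
  rw [htail, Finset.sum_congr rfl hx]

end Borel

section LocalInverse

variable {E F : Type*} [NormedAddCommGroup E] [NormedSpace ℝ E] [FiniteDimensional ℝ E]
  [NormedAddCommGroup F] [NormedSpace ℝ F]

theorem exists_contDiff_eventuallyEq {f : E → F} {u : Set E} {x : E} (hu : u ∈ 𝓝 x)
    (hf : ContDiffOn ℝ ∞ f u) : ∃ g : E → F, ContDiff ℝ ∞ g ∧ g =ᶠ[𝓝 x] f := by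
  obtain ⟨δ, hδ, hball⟩ := Metric.nhds_basis_closedBall.mem_iff.1 (interior_mem_nhds.2 hu)
  let φ : ContDiffBump x := ⟨δ / 2, δ, half_pos hδ, half_lt_self hδ⟩
  refine ⟨fun y => φ y • f y, contDiff_iff_contDiffAt.2 fun y => ?_, ?_⟩
  · by_cases hy : y ∈ tsupport φ
    · rw [φ.tsupport_eq] at hy
      exact φ.contDiffAt.smul (hf.contDiffAt (mem_interior_iff_mem_nhds.1 (hball hy)))
    · refine (contDiffAt_const (c := (0 : F))).congr_of_eventuallyEq ?_
      filter_upwards [notMem_tsupport_iff_eventuallyEq.1 hy] with z hz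
      rw [hz, Pi.zero_apply, zero_smul]
  · filter_upwards [φ.eventuallyEq_one] with y hy
    rw [hy, Pi.one_apply, one_smul]

theorem exists_contDiff_eventually_rightInverse {A : E → F} (hA : ContDiff ℝ ∞ A) {x : E}
    {A' : E ≃L[ℝ] F} (hA' : HasFDerivAt A (A' : E →L[ℝ] F) x) :
    ∃ τ : F → E, ContDiff ℝ ∞ τ ∧ τ (A x) = x ∧ ∀ᶠ y in 𝓝 (A x), A (τ y) = y := by
  have : CompleteSpace E := FiniteDimensional.complete ℝ E
  have : FiniteDimensional ℝ F := A'.toLinearEquiv.finiteDimensional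
  have hAx : ContDiffAt ℝ ∞ A x := hA.contDiffAt
  set e := hAx.toOpenPartialHomeomorph A hA' (by simp)
  have hx : x ∈ e.source := hAx.mem_toOpenPartialHomeomorph_source hA' (by simp)
  have hsymm : e.symm (A x) = x := e.left_inv hx
  have hinv_open : IsOpen {z | fderiv ℝ A z ∈ range ((↑) : (E ≃L[ℝ] F) → E →L[ℝ] F)} :=
    ContinuousLinearEquiv.isOpen.preimage (hA.continuous_fderiv (by simp))
  have hu := (e.isOpen_inter_preimage_symm hinv_open).mem_nhds (x := A x)
    ⟨e.map_source hx, by rw [mem_preimage, hsymm]; exact ⟨A', hA'.fderiv.symm⟩⟩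
  have hsmooth : ContDiffOn ℝ ∞ e.symm (e.target ∩ e.symm ⁻¹'
      {z | fderiv ℝ A z ∈ range ((↑) : (E ≃L[ℝ] F) → E →L[ℝ] F)}) := by
    rintro y ⟨hy, L, hL⟩
    refine (e.contDiffAt_symm hy (f₀' := L) ?_ hA.contDiffAt).contDiffWithinAt
    rw [hL]
    exact (hA.differentiable (by simp) _).hasFDerivAt
  obtain ⟨τ, hτ, hτe⟩ := exists_contDiff_eventuallyEq hu hsmooth
  refine ⟨τ, hτ, hτe.self_of_nhds.trans hsymm, ?_⟩
  filter_upwards [hτe, e.open_target.mem_nhds (e.map_source hx)] with y hy hye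
  rw [hy]
  exact e.right_inv hye

end LocalInverse

section TangentToIdentity

variable {E : Type*} [NormedAddCommGroup E]

theorem VanishesToOrder.of_sub_id {A : E → E} (h : VanishesToOrder 2 fun p => A p - p) :
    VanishesToOrder 1 A :=
  ((h.mono one_le_two).add vanishesToOrder_id).congr fun p => sub_add_cancel (A p) p

variable [NormedSpace ℝ E]

theorem VanishesToOrder.hasFDerivAt_of_sub_clm {F : Type*} [NormedAddCommGroup F] [NormedSpace ℝ F]
    {f : E → F} {L : E →L[ℝ] F} (h : VanishesToOrder 2 fun p => f p - L p) :
    HasFDerivAt f L 0 := by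
  have hsub : HasFDerivAt (fun p => f p - L p) (0 : E →L[ℝ] F) 0 :=
    IsBigO.hasFDerivAt (n := 2) (by simpa only [VanishesToOrder, sub_zero] using h) one_lt_two
  simpa using hsub.fun_add L.hasFDerivAt

theorem exists_isOpen_injOn_of_vanishesToOrder_sub [CompleteSpace E] {f : E → E} (A : E ≃L[ℝ] E)
    (hf : ContDiff ℝ ∞ f) (h : VanishesToOrder 2 fun p => f p - A p) :
    ∃ V : Set E, IsOpen V ∧ 0 ∈ V ∧ InjOn f V := by
  have hA : HasStrictFDerivAt f (A : E →L[ℝ] E) 0 :=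
    hf.contDiffAt.hasStrictFDerivAt' h.hasFDerivAt_of_sub_clm (by simp)
  exact ⟨_, (hA.toOpenPartialHomeomorph f).open_source, hA.mem_toOpenPartialHomeomorph_source,
    (hA.toOpenPartialHomeomorph f).injOn⟩

theorem exists_contDiff_rightInverse_of_tangent_id [FiniteDimensional ℝ E] {A : E → E}
    (hA : ContDiff ℝ ∞ A) (h : VanishesToOrder 2 fun p => A p - p) :
    ∃ τ : E → E, ContDiff ℝ ∞ τ ∧ (VanishesToOrder 2 fun p => τ p - p) ∧
      ∀ᶠ p in 𝓝 0, A (τ p) = p := by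
  have hA0 : A 0 = 0 := h.of_sub_id.apply_eq_zero one_ne_zero
  obtain ⟨τ, hτ, hτ0, hAτ⟩ := exists_contDiff_eventually_rightInverse hA
    (A' := ContinuousLinearEquiv.refl ℝ E) h.hasFDerivAt_of_sub_clm
  rw [hA0] at hτ0 hAτ
  have hτ1 : VanishesToOrder 1 τ := by
    simpa only [VanishesToOrder, hτ0, sub_zero, pow_one] using
      (hτ.differentiable (by simp) 0).hasFDerivAt.isBigO_sub.norm_right
  refine ⟨τ, hτ, (h.comp_one hτ1).neg.congr' ?_, hAτ⟩
  filter_upwards [hAτ] with p hp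
  rw [hp, neg_sub]

end TangentToIdentity

section DiagonalDerivation

open MvPolynomial

variable {σ R K ι : Type*} [CommRing R] [Field K]

/-- The derivation of the polynomial ring that scales the variable `X i` by `w i`; the monomials
are its eigenvectors. -/
def diagonalDerivation (w : σ → R) : Derivation R (MvPolynomial σ R) (MvPolynomial σ R) :=
  mkDerivation R fun i => C (w i) * X i

theorem diagonalDerivation_X (w : σ → R) (i : σ) :
    diagonalDerivation w (X i) = C (w i) * X i :=
  mkDerivation_X R _ i

theorem diagonalDerivation_monomial (w : σ → R) (m : σ →₀ ℕ) (a : R) :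
    diagonalDerivation w (monomial m a) = monomial m (Finsupp.weight w m * a) := by
  rw [diagonalDerivation, mkDerivation_monomial, Finsupp.weight_apply, Finsupp.sum, Finsupp.sum,
    Finset.sum_mul, map_sum, Finset.smul_sum]
  refine Finset.sum_congr rfl fun i hi => ?_
  have him : m - Finsupp.single i 1 + Finsupp.single i 1 = m :=
    tsub_add_cancel_of_le (Finsupp.single_le_iff.2 (Nat.one_le_iff_ne_zero.2 (by simpa using hi)))
  rw [smul_eq_mul, C_mul_X_eq_monomial, monomial_mul, him, smul_monomial, smul_eq_mul, nsmul_eq_mul]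
  ring_nf

theorem coeff_diagonalDerivation (w : σ → R) (P : MvPolynomial σ R) (m : σ →₀ ℕ) :
    coeff m (diagonalDerivation w P) = Finsupp.weight w m * coeff m P := by
  classical
  induction P using MvPolynomial.induction_on' with
  | monomial u a =>
    rw [diagonalDerivation_monomial, coeff_monomial, coeff_monomial]
    split_ifs with h
    · rw [h]
    · rw [mul_zero]
  | add P Q hP hQ => rw [map_add, coeff_add, coeff_add, hP, hQ, mul_add]

theorem exists_coeff_eq {c : (σ →₀ ℕ) → R} (hc : c.support.Finite) :
    ∃ P : MvPolynomial σ R, ∀ m, coeff m P = c m := by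
  classical
  refine ⟨∑ m ∈ hc.toFinset, monomial m (c m), fun m => ?_⟩
  simp only [coeff_sum, coeff_monomial, Finset.sum_ite_eq', Finite.mem_toFinset,
    Function.mem_support, ite_not]
  split_ifs with h
  exacts [h.symm, rfl]

/-- Monomial by monomial: on a monomial of nonzero weight for some `i` the operator
`diagonalDerivation (w i)` is invertible, and the compatibility condition makes the quotients for
different such `i` agree. -/
theorem exists_eq_add_diagonalDerivation [Finite ι] (w : ι → σ → K) {P : ι → MvPolynomial σ K}
    {N : ℕ} (hP : ∀ i, (P i).IsHomogeneous N)
    (hcomm : ∀ i j, diagonalDerivation (w i) (P j) = diagonalDerivation (w j) (P i)) :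
    ∃ (S : MvPolynomial σ K) (Q : ι → MvPolynomial σ K), S.IsHomogeneous N ∧
      (∀ i, (Q i).IsHomogeneous N) ∧ (∀ i j, diagonalDerivation (w i) (Q j) = 0) ∧
      ∀ i, P i = Q i + diagonalDerivation (w i) S := by
  classical
  have hcoeff : ∀ i j m, Finsupp.weight (w i) m * coeff m (P j) =
      Finsupp.weight (w j) m * coeff m (P i) := fun i j m => by
    rw [← coeff_diagonalDerivation, hcomm, coeff_diagonalDerivation]
  let c (m : σ →₀ ℕ) : K := if h : ∃ i, Finsupp.weight (w i) m ≠ 0 then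
    coeff m (P h.choose) / Finsupp.weight (w h.choose) m else 0
  have hc0 : ∀ m, c m ≠ 0 → ∃ i, coeff m (P i) ≠ 0 := fun m hm => by
    by_cases h : ∃ i, Finsupp.weight (w i) m ≠ 0
    · exact ⟨h.choose, fun h0 => hm (by simp only [c, dif_pos h, h0, zero_div])⟩
    · exact absurd (dif_neg h) hm
  have hcP : ∀ i m, coeff m (P i) = (if ∀ j, Finsupp.weight (w j) m = 0 then coeff m (P i) else 0) +
      Finsupp.weight (w i) m * c m := fun i m => by
    by_cases h : ∃ j, Finsupp.weight (w j) m ≠ 0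
    · rw [if_neg (by simpa using h), zero_add]
      simp only [c, dif_pos h]
      rw [← mul_div_assoc, hcoeff, mul_div_cancel_left₀ _ h.choose_spec]
    · rw [if_pos (by simpa using h), not_not.1 fun hi => h ⟨i, hi⟩, zero_mul, add_zero]
  obtain ⟨S, hS⟩ : ∃ S : MvPolynomial σ K, ∀ m, coeff m S = c m := by
    refine exists_coeff_eq ((finite_iUnion fun i => (P i).support.finite_toSet).subset
      fun m hm => ?_)
    simpa using hc0 m hm
  have hSN : S.IsHomogeneous N := fun m hm => by
    obtain ⟨i, hi⟩ := hc0 m (hS m ▸ hm)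
    exact hP i hi
  have hQ : ∀ i m, coeff m (P i - diagonalDerivation (w i) S) =
      if ∀ j, Finsupp.weight (w j) m = 0 then coeff m (P i) else 0 := fun i m => by
    rw [coeff_sub, coeff_diagonalDerivation, hS, sub_eq_iff_eq_add]
    exact hcP i m
  refine ⟨S, fun i => P i - diagonalDerivation (w i) S, hSN, fun i m hm => ?_, fun i j => ?_,
    fun i => (sub_add_cancel _ _).symm⟩
  · rw [hQ] at hm
    exact hP i fun h0 => hm (by rw [h0, ite_self])
  · ext m
    rw [coeff_diagonalDerivation, hQ, coeff_zero]
    split_ifs with h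
    exacts [by rw [h i, zero_mul], mul_zero _]

end DiagonalDerivation

section PolynomialFunctions

open MvPolynomial

variable {E σ : Type*} [NormedAddCommGroup E] [NormedSpace ℝ E]
  (z : E →L[ℝ] σ → ℂ)

theorem contDiff_eval_clm (P : MvPolynomial σ ℂ) : ContDiff ℝ ∞ fun p => eval (z p) P :=
  (AnalyticOnNhd.eval_continuousLinearMap z P).contDiff

theorem eval_smul_of_isHomogeneous {R : Type*} [CommRing R] {P : MvPolynomial σ R} {N : ℕ}
    (hP : P.IsHomogeneous N) (t : R) (y : σ → R) : eval (t • y) P = t ^ N * eval y P := by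
  rw [eval_eq, eval_eq, Finset.mul_sum]
  refine Finset.sum_congr rfl fun m hm => ?_
  have hdeg : ∑ i ∈ m.support, m i = N := hP.degree_eq_sum_deg_support hm |>.symm
  simp only [Pi.smul_apply, smul_eq_mul, mul_pow, Finset.prod_mul_distrib,
    Finset.prod_pow_eq_pow_sum, hdeg]
  ring

theorem fderiv_eval_clm_apply {w : σ → ℂ} {p v : E} (hv : ∀ i, z v i = w i * z p i)
    (P : MvPolynomial σ ℂ) :
    fderiv ℝ (fun p => eval (z p) P) p v = eval (z p) (diagonalDerivation w P) := by
  have hd (P : MvPolynomial σ ℂ) : DifferentiableAt ℝ (fun p => eval (z p) P) p :=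
    (contDiff_eval_clm z P).differentiable (by simp) p
  induction P using MvPolynomial.induction_on with
  | C a => simp [← algebraMap_eq]
  | add P Q hP hQ =>
    simp only [map_add]
    rw [fderiv_fun_add (hd P) (hd Q), add_apply, hP, hQ]
  | mul_X P j hP =>
    have hX : fderiv ℝ (fun p => z p j) p v = z v j := by
      exact congrArg (fun L : E →L[ℝ] ℂ => L v)
        ((ContinuousLinearMap.proj (R := ℝ) (φ := fun _ : σ => ℂ) j).comp z).fderiv
    simp only [map_mul, eval_X]
    rw [fderiv_fun_mul (hd P) (by simpa using hd (X j)), add_apply, smul_apply, smul_apply, hP, hX,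
      hv]
    simp only [Derivation.leibniz, diagonalDerivation_X, smul_eq_mul, map_add, map_mul, eval_C,
      eval_X]

end PolynomialFunctions

section HomogeneousPolynomials

open MvPolynomial hiding funext

theorem exists_isHomogeneous_eval_eq {R ι : Type*} [CommRing R] [Finite ι] {n : ℕ}
    (f : MultilinearMap R (fun _ : Fin n => ι → R) R) :
    ∃ P : MvPolynomial ι R, P.IsHomogeneous n ∧ ∀ p, f (fun _ => p) = eval p P := by
  classical
  have := Fintype.ofFinite ι
  refine ⟨∑ r : Fin n → ι, C (f fun j => Pi.single (r j) 1) * ∏ j, X (r j),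
    IsHomogeneous.sum _ _ _ fun r _ => IsHomogeneous.C_mul ?_ _, fun p => ?_⟩
  · simpa using IsHomogeneous.prod Finset.univ (fun j => X (r j)) (fun _ => 1)
      fun j _ => isHomogeneous_X R (r j)
  · have hp : p = ∑ i, p i • (Pi.single i 1 : ι → R) := by
      ext j; simp [Pi.single_apply]
    calc f (fun _ => p) = f (fun _ => ∑ i, p i • (Pi.single i 1 : ι → R)) := by rw [← hp]
      _ = ∑ r : Fin n → ι, (∏ j, p (r j)) * f fun j => Pi.single (r j) 1 := by
        rw [f.map_sum]
        exact Finset.sum_congr rfl fun r _ => f.map_smul_univ (fun j => p (r j)) _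
      _ = _ := by simp [mul_comm]

theorem HomogeneousOfDegree.exists_isHomogeneous_eval_eq {ι : Type*} [Fintype ι]
    {r : (ι → ℝ) → ℝ} {N : ℕ} (hr : HomogeneousOfDegree N r) (hsmooth : ContDiff ℝ ∞ r) :
    ∃ P : MvPolynomial ι ℝ, P.IsHomogeneous N ∧ ∀ p, r p = eval p P := by
  have htaylor : ∀ p, r p = taylorTerm r N p := fun p => by
    have hsub : HomogeneousOfDegree N fun p => r p - taylorTerm r N p := fun t x => by
      simp only [hr t x, homogeneousOfDegree_taylorTerm r N t x, smul_sub]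
    exact sub_eq_zero.1 (hsub.eq_zero_of_vanishesToOrder_succ
      ((hr.vanishesToOrder hsmooth.continuous).sub_taylorTerm hsmooth) p)
  obtain ⟨P, hP, hPr⟩ := _root_.exists_isHomogeneous_eval_eq
    ((N.factorial : ℝ)⁻¹ • (iteratedFDeriv ℝ N r 0).toMultilinearMap)
  exact ⟨P, hP, fun p => (htaylor p).trans (hPr p)⟩

theorem homogeneousOfDegree_re_eval {E σ : Type*} [NormedAddCommGroup E] [NormedSpace ℝ E]
    (z : E →L[ℝ] σ → ℂ) {P : MvPolynomial σ ℂ} {N : ℕ} (hP : P.IsHomogeneous N) :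
    HomogeneousOfDegree N fun p => (eval (z p) P).re := fun t p => by
  have hz : z (t • p) = (t : ℂ) • z p := z.map_smul t p
  simp only [hz]
  rw [eval_smul_of_isHomogeneous hP, ← Complex.ofReal_pow, Complex.re_ofReal_mul, smul_eq_mul]

end HomogeneousPolynomials

section ComplexCoordinates

open MvPolynomial hiding funext

/-- The complex coordinates `(x₁ + ix₂, x₁ - ix₂, ξ₁ + iξ₂, ξ₁ - iξ₂)` on `ℝ⁴`, in which the
Hamiltonian vector fields of `q₁` and `q₂` are simultaneously diagonal. -/
def complexCoord : E4 →L[ℝ] Fin 4 → ℂ :=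
  letI x (i : Fin 4) : E4 →L[ℝ] ℂ := Complex.ofRealCLM.comp (ContinuousLinearMap.proj i)
  ContinuousLinearMap.pi ![x 0 + Complex.I • x 2, x 0 - Complex.I • x 2,
    x 1 + Complex.I • x 3, x 1 - Complex.I • x 3]

theorem complexCoord_apply (p : E4) : complexCoord p =
    ![p 0 + Complex.I * p 2, p 0 - Complex.I * p 2,
      p 1 + Complex.I * p 3, p 1 - Complex.I * p 3] := by
  ext i; fin_cases i <;> simp [complexCoord]

/-- The coordinates `complexCoord` as polynomials in `(x₁, ξ₁, x₂, ξ₂)`. -/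
def complexCoordPoly : Fin 4 → MvPolynomial (Fin 4) ℂ :=
  ![X 0 + C Complex.I * X 2, X 0 - C Complex.I * X 2,
    X 1 + C Complex.I * X 3, X 1 - C Complex.I * X 3]

/-- The coordinates `(x₁, ξ₁, x₂, ξ₂)` as polynomials in those of `complexCoord`. -/
def realCoordPoly : Fin 4 → MvPolynomial (Fin 4) ℂ :=
  ![C (1 / 2) * (X 0 + X 1), C (1 / 2) * (X 2 + X 3),
    C (-Complex.I / 2) * (X 0 - X 1), C (-Complex.I / 2) * (X 2 - X 3)]

theorem isHomogeneous_realCoordPoly (i : Fin 4) : (realCoordPoly i).IsHomogeneous 1 := by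
  have hX := isHomogeneous_X (σ := Fin 4) ℂ
  fin_cases i
  exacts [((hX 0).add (hX 1)).C_mul _, ((hX 2).add (hX 3)).C_mul _, ((hX 0).sub (hX 1)).C_mul _,
    ((hX 2).sub (hX 3)).C_mul _]

theorem bind₁_realCoordPoly_complexCoordPoly (i : Fin 4) :
    bind₁ realCoordPoly (complexCoordPoly i) = X i := by
  refine MvPolynomial.funext fun z => ?_
  fin_cases i <;> simp [realCoordPoly, complexCoordPoly] <;> ring_nf <;> simp <;> ring

theorem bind₁_complexCoordPoly_realCoordPoly (i : Fin 4) :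
    bind₁ complexCoordPoly (realCoordPoly i) = X i := by
  refine MvPolynomial.funext fun z => ?_
  fin_cases i <;> simp [realCoordPoly, complexCoordPoly] <;> ring_nf <;> simp

theorem eval_complexCoord (p : E4) (P : MvPolynomial (Fin 4) ℂ) :
    eval (complexCoord p) P = eval (fun i => (p i : ℂ)) (bind₁ complexCoordPoly P) := by
  have hz : complexCoord p = fun i => aeval (fun i => (p i : ℂ)) (complexCoordPoly i) := by
    ext i; fin_cases i <;> simp [complexCoord_apply, complexCoordPoly]
  rw [hz, ← coe_aeval_eq_eval, ← coe_aeval_eq_eval, RingHom.coe_coe, RingHom.coe_coe, aeval_bind₁]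

theorem eq_zero_of_eval_complexCoord_eq_zero {Q : MvPolynomial (Fin 4) ℂ}
    (h : ∀ p, eval (complexCoord p) Q = 0) : Q = 0 := by
  have hbind : bind₁ complexCoordPoly Q = 0 := by
    refine funext_set (fun _ => range Complex.ofReal)
      (fun _ => infinite_range_of_injective Complex.ofReal_injective) fun x hx => ?_
    choose p hp using fun i => hx i trivial
    rw [map_zero, ← h p, eval_complexCoord, funext hp]
  calc Q = bind₁ realCoordPoly (bind₁ complexCoordPoly Q) := by
        rw [bind₁_bind₁, funext bind₁_realCoordPoly_complexCoordPoly, bind₁_X_left, AlgHom.id_apply]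
    _ = 0 := by rw [hbind, map_zero]

theorem HomogeneousOfDegree.exists_eval_complexCoord_eq {r : E4 → ℝ} {N : ℕ}
    (hr : HomogeneousOfDegree N r) (hsmooth : ContDiff ℝ ∞ r) :
    ∃ P : MvPolynomial (Fin 4) ℂ, P.IsHomogeneous N ∧ ∀ p, (r p : ℂ) = eval (complexCoord p) P := by
  obtain ⟨R, hR, hrR⟩ := hr.exists_isHomogeneous_eval_eq hsmooth
  refine ⟨bind₁ realCoordPoly (map Complex.ofRealHom R), ?_, fun p => ?_⟩
  · exact one_mul N ▸ (hR.map Complex.ofRealHom).aeval realCoordPoly isHomogeneous_realCoordPoly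
  · rw [eval_complexCoord, bind₁_bind₁, funext bind₁_complexCoordPoly_realCoordPoly, bind₁_X_left,
      AlgHom.id_apply, hrR, eval_map]
    exact eval₂_comp Complex.ofRealHom p R

end ComplexCoordinates

section HomologicalEquation

open MvPolynomial hiding funext

/-- The Hamiltonian vector fields of `q₁` and `q₂`. -/
def focusFocusField : Fin 2 → E4 → E4 :=
  ![fun p => ![p 0, -p 1, p 2, -p 3], fun p => ![-p 2, -p 3, p 0, p 1]]

/-- The eigenvalues of `focusFocusField` in the coordinates `complexCoord`. -/
def focusFocusWeight : Fin 2 → Fin 4 → ℂ :=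
  ![![1, 1, -1, -1], ![Complex.I, -Complex.I, Complex.I, -Complex.I]]

theorem complexCoord_focusFocusField (i : Fin 2) (p : E4) (j : Fin 4) :
    complexCoord (focusFocusField i p) j = focusFocusWeight i j * complexCoord p j := by
  fin_cases i <;> fin_cases j <;>
    simp [complexCoord_apply, focusFocusField, focusFocusWeight] <;> ring_nf <;> simp

theorem pd_q1 (j : Fin 4) (p : E4) : pd j q1 p = ![p 1, p 0, p 3, p 2] j := by
  have hx (i : Fin 4) : HasFDerivAt (fun p : E4 => p i)
      (ContinuousLinearMap.proj (R := ℝ) (φ := fun _ => ℝ) i) p := hasFDerivAt_apply i p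
  have h : HasFDerivAt q1 _ p := ((hx 0).mul (hx 1)).fun_add ((hx 2).mul (hx 3))
  rw [pd, h.fderiv]
  fin_cases j <;> simp

theorem pd_q2 (j : Fin 4) (p : E4) : pd j q2 p = ![p 3, -p 2, -p 1, p 0] j := by
  have hx (i : Fin 4) : HasFDerivAt (fun p : E4 => p i)
      (ContinuousLinearMap.proj (R := ℝ) (φ := fun _ => ℝ) i) p := hasFDerivAt_apply i p
  have h : HasFDerivAt q2 _ p := ((hx 0).mul (hx 3)).fun_sub ((hx 2).mul (hx 1))
  rw [pd, h.fderiv]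
  fin_cases j <;> simp

theorem clm_apply_eq_sum_single {ι : Type*} [Fintype ι] [DecidableEq ι] (a : (ι → ℝ) →L[ℝ] ℝ)
    (v : ι → ℝ) : a v = ∑ j, v j * a (Pi.single j 1) := by
  conv_lhs => rw [pi_eq_sum_univ' v, map_sum]
  simp only [map_smul, smul_eq_mul]

theorem fderiv_apply_eq_sum_pd (s : E4 → ℝ) (p v : E4) : fderiv ℝ s p v = ∑ j, v j * pd j s p :=
  clm_apply_eq_sum_single (fderiv ℝ s p) v

theorem pois_qmap (i : Fin 2) (s : E4 → ℝ) (p : E4) :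
    pois (fun p => qmap p i) s p = fderiv ℝ s p (focusFocusField i p) := by
  rw [fderiv_apply_eq_sum_pd, Fin.sum_univ_four]
  fin_cases i
  · change pois q1 s p = _
    simp [pois, pd_q1, focusFocusField]; ring
  · change pois q2 s p = _
    simp [pois, pd_q2, focusFocusField]; ring

theorem weight_focusFocusWeight_eq_zero {m : Fin 4 →₀ ℕ}
    (h : ∀ i, Finsupp.weight (focusFocusWeight i) m = 0) : m 3 = m 0 ∧ m 2 = m 1 := by
  have h0 := congrArg Complex.re (h 0)
  have h1 := congrArg Complex.im (h 1)
  simp [Finsupp.weight_apply, Finsupp.sum_fintype, Fin.sum_univ_four, focusFocusWeight] at h0 h1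
  constructor
  · exact_mod_cast (by linarith : (m 3 : ℝ) = m 0)
  · exact_mod_cast (by linarith : (m 2 : ℝ) = m 1)

/-- The rounding in `(N + 1) / 2` only matters when `Q = 0`: a nonzero resonant polynomial has even
degree. -/
theorem exists_eq_aeval_of_diagonalDerivation_eq_zero {Q : MvPolynomial (Fin 4) ℂ} {N : ℕ}
    (hQ : Q.IsHomogeneous N) (hres : ∀ i, diagonalDerivation (focusFocusWeight i) Q = 0) :
    ∃ G : MvPolynomial (Fin 2) ℂ, G.IsHomogeneous ((N + 1) / 2) ∧
      Q = aeval ![X 0 * X 3, X 1 * X 2] G := by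
  have hm : ∀ m ∈ Q.support, m 3 = m 0 ∧ m 2 = m 1 := fun m hm =>
    weight_focusFocusWeight_eq_zero fun i => by
      have hi := coeff_diagonalDerivation (focusFocusWeight i) Q m
      rw [hres i, coeff_zero, eq_comm, mul_eq_zero] at hi
      exact hi.resolve_right (mem_support_iff.1 hm)
  refine ⟨∑ m ∈ Q.support, C (coeff m Q) * (X 0 ^ m 0 * X 1 ^ m 1),
    IsHomogeneous.sum _ _ _ fun m hmQ => IsHomogeneous.C_mul ?_ _, ?_⟩
  · have hdeg := hQ.degree_eq_sum_deg_support hmQ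
    rw [← Finsupp.degree_apply, Finsupp.degree_eq_sum, Fin.sum_univ_four, (hm m hmQ).1,
      (hm m hmQ).2] at hdeg
    rw [show (N + 1) / 2 = m 0 + m 1 by omega]
    exact (isHomogeneous_X_pow 0 _).mul (isHomogeneous_X_pow 1 _)
  · conv_lhs => rw [Q.as_sum]
    rw [map_sum]
    refine Finset.sum_congr rfl fun m hmQ => ?_
    rw [monomial_eq, Finsupp.prod_fintype _ _ fun _ => pow_zero _, Fin.prod_univ_four,
      (hm m hmQ).1, (hm m hmQ).2]
    simp only [map_mul, map_pow, algHom_C, aeval_X, algebraMap_eq, Matrix.cons_val_zero,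
      Matrix.cons_val_one, mul_pow]
    ring

theorem exists_re_eval_complexCoord_eq_comp_qmap {Q : MvPolynomial (Fin 4) ℂ} {N : ℕ}
    (hQ : Q.IsHomogeneous N) (hres : ∀ i, diagonalDerivation (focusFocusWeight i) Q = 0) :
    ∃ g : E2 → ℝ, ContDiff ℝ ∞ g ∧ HomogeneousOfDegree ((N + 1) / 2) g ∧
      ∀ p, (eval (complexCoord p) Q).re = g (qmap p) := by
  obtain ⟨G, hG, rfl⟩ := exists_eq_aeval_of_diagonalDerivation_eq_zero hQ hres
  let x (i : Fin 2) : E2 →L[ℝ] ℂ := Complex.ofRealCLM.comp (ContinuousLinearMap.proj i)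
  let z : E2 →L[ℝ] Fin 2 → ℂ :=
    ContinuousLinearMap.pi ![x 0 - Complex.I • x 1, x 0 + Complex.I • x 1]
  have hz : ∀ p, z (qmap p) = ![complexCoord p 0 * complexCoord p 3,
      complexCoord p 1 * complexCoord p 2] := fun p => by
    ext i
    fin_cases i <;> simp [z, x, qmap, q1, q2, complexCoord_apply] <;> ring_nf <;> simp
  refine ⟨fun y => (eval (z y) G).re, Complex.reCLM.contDiff.comp (contDiff_eval_clm z G),
    homogeneousOfDegree_re_eval z hG, fun p => ?_⟩
  simp only [hz]
  rw [← coe_aeval_eq_eval, ← coe_aeval_eq_eval, RingHom.coe_coe, RingHom.coe_coe, ← bind₁,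
    aeval_bind₁]
  congr 3
  ext i
  fin_cases i <;> simp

theorem pois_qmap_re_eval (i : Fin 2) (p : E4) (P : MvPolynomial (Fin 4) ℂ) :
    pois (fun p => qmap p i) (fun p => (eval (complexCoord p) P).re) p =
      (eval (complexCoord p) (diagonalDerivation (focusFocusWeight i) P)).re := by
  rw [pois_qmap, ← fderiv_eval_clm_apply complexCoord (complexCoord_focusFocusField i p)]
  exact congrArg (fun L : E4 →L[ℝ] ℝ => L _) (Complex.reCLM.hasFDerivAt.comp p
    ((contDiff_eval_clm complexCoord P).differentiable (by simp) p).hasFDerivAt).fderiv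

theorem ofReal_pois_qmap {r : E4 → ℝ} {P : MvPolynomial (Fin 4) ℂ}
    (hP : ∀ p, (r p : ℂ) = eval (complexCoord p) P) (i : Fin 2) (p : E4) :
    (pois (fun p => qmap p i) r p : ℂ) =
      eval (complexCoord p) (diagonalDerivation (focusFocusWeight i) P) := by
  have hr : r = fun p => (eval (complexCoord p) P).re := funext fun p => by
    rw [← hP, Complex.ofReal_re]
  have hd : DifferentiableAt ℝ r p := by
    rw [hr]
    exact Complex.reCLM.differentiableAt.comp p
      ((contDiff_eval_clm complexCoord P).differentiable (by simp) p)
  rw [pois_qmap, ← fderiv_eval_clm_apply complexCoord (complexCoord_focusFocusField i p),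
    ← funext hP]
  exact congrArg (fun L : E4 →L[ℝ] ℂ => L _)
    (Complex.ofRealCLM.hasFDerivAt.comp p hd.hasFDerivAt).fderiv.symm

theorem exists_homological_solution {r : E4 → E2} {N : ℕ} (hr : ContDiff ℝ ∞ r)
    (hrN : HomogeneousOfDegree N r)
    (hcomm : ∀ i j p, pois (fun p => qmap p i) (fun p => r p j) p =
      pois (fun p => qmap p j) (fun p => r p i) p) :
    ∃ (s : E4 → ℝ) (g : E2 → E2), ContDiff ℝ ∞ s ∧ HomogeneousOfDegree N s ∧ ContDiff ℝ ∞ g ∧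
      HomogeneousOfDegree ((N + 1) / 2) g ∧
      ∀ p i, r p i = g (qmap p) i + pois (fun p => qmap p i) s p := by
  choose P hP hPr using fun i => HomogeneousOfDegree.exists_eval_complexCoord_eq
    (fun t p => congrFun (hrN t p) i) (contDiff_pi.1 hr i)
  obtain ⟨S, Q, hS, hQ, hQres, hPQ⟩ :=
    exists_eq_add_diagonalDerivation focusFocusWeight hP fun i j => sub_eq_zero.1 <|
      eq_zero_of_eval_complexCoord_eq_zero fun p => by
        rw [map_sub, ← ofReal_pois_qmap (hPr j), ← ofReal_pois_qmap (hPr i), hcomm, sub_self]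
  choose g hg hgN hgQ using fun i =>
    exists_re_eval_complexCoord_eq_comp_qmap (hQ i) fun j => hQres j i
  refine ⟨fun p => (eval (complexCoord p) S).re, fun y i => g i y,
    Complex.reCLM.contDiff.comp (contDiff_eval_clm complexCoord S),
    homogeneousOfDegree_re_eval complexCoord hS, contDiff_pi.2 hg,
    fun t y => funext fun i => hgN i t y, fun p i => ?_⟩
  simp only [← hgQ]
  rw [pois_qmap_re_eval, ← Complex.add_re, ← map_add, ← hPQ, ← hPr, Complex.ofReal_re]

end HomologicalEquation

section PoissonBracket

/-- The Poisson bracket as a bilinear form on covectors: the inverse of `omega0`. -/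
def poissonForm : LinearMap.BilinForm ℝ (E4 →L[ℝ] ℝ) :=
  LinearMap.mk₂ ℝ (fun a b =>
    a (Pi.single 1 1) * b (Pi.single 0 1) - a (Pi.single 0 1) * b (Pi.single 1 1) +
      a (Pi.single 3 1) * b (Pi.single 2 1) - a (Pi.single 2 1) * b (Pi.single 3 1))
    (fun a a' b => by simp only [add_apply]; ring)
    (fun c a b => by simp only [smul_apply, smul_eq_mul]; ring)
    (fun a b b' => by simp only [add_apply]; ring)
    (fun c a b => by simp only [smul_apply, smul_eq_mul]; ring)

theorem pois_eq_poissonForm (f g : E4 → ℝ) (p : E4) :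
    pois f g p = poissonForm (fderiv ℝ f p) (fderiv ℝ g p) :=
  rfl

theorem pois_self (f : E4 → ℝ) (p : E4) : pois f f p = 0 := by
  rw [pois]; ring

theorem pois_antisymm (f g : E4 → ℝ) (p : E4) : pois f g p = -pois g f p := by
  rw [pois, pois]; ring

theorem pois_apply_eq_zero {F : E4 → E2} {p : E4}
    (h : pois (fun x => F x 0) (fun x => F x 1) p = 0) (i j : Fin 2) :
    pois (fun x => F x i) (fun x => F x j) p = 0 := by
  have h' := (pois_antisymm (fun x => F x 1) (fun x => F x 0) p).trans (by rw [h, neg_zero])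
  fin_cases i <;> fin_cases j
  exacts [pois_self _ p, h, h', pois_self _ p]

theorem pois_comp_eq_zero {ι : Type*} [Finite ι] {F : E4 → ι → ℝ} {g g' : (ι → ℝ) → ℝ} {p : E4}
    (hF : DifferentiableAt ℝ F p) (hg : DifferentiableAt ℝ g (F p))
    (hg' : DifferentiableAt ℝ g' (F p))
    (h : ∀ i j, pois (fun x => F x i) (fun x => F x j) p = 0) :
    pois (fun x => g (F x)) (fun x => g' (F x)) p = 0 := by
  classical
  have := Fintype.ofFinite ι
  have hchain : ∀ g : (ι → ℝ) → ℝ, DifferentiableAt ℝ g (F p) → fderiv ℝ (fun x => g (F x)) p =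
      ∑ i, fderiv ℝ g (F p) (Pi.single i 1) • fderiv ℝ (fun x => F x i) p := fun g hg => by
    ext v
    have hi : ∀ i, fderiv ℝ (fun x => F x i) p v = fderiv ℝ F p v i := fun i => by
      rw [fderiv_apply hF]; rfl
    have hcomp : fderiv ℝ (fun x => g (F x)) p = (fderiv ℝ g (F p)).comp (fderiv ℝ F p) :=
      fderiv_comp p hg hF
    rw [hcomp, ContinuousLinearMap.comp_apply, clm_apply_eq_sum_single]
    simp [hi, mul_comm]
  rw [pois_eq_poissonForm, hchain g hg, hchain g' hg']
  simp only [map_sum, map_smul, LinearMap.sum_apply, LinearMap.smul_apply, ← pois_eq_poissonForm, h,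
    smul_zero, Finset.sum_const_zero]

theorem exists_forall_eq_omega0 (a : E4 →L[ℝ] ℝ) : ∃ u, ∀ v, a v = omega0 u v := by
  refine ⟨![-a (Pi.single 1 1), a (Pi.single 0 1), -a (Pi.single 3 1), a (Pi.single 2 1)],
    fun v => ?_⟩
  rw [clm_apply_eq_sum_single a v]
  simp [omega0, Fin.sum_univ_four]
  ring

theorem poissonForm_eq_omega0 {a b : E4 →L[ℝ] ℝ} {u v : E4} (ha : ∀ x, a x = omega0 u x)
    (hb : ∀ x, b x = omega0 v x) : poissonForm a b = omega0 u v := by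
  simp [poissonForm, ha, hb, omega0]
  ring

theorem surjective_of_omega0_eq {A : E4 →L[ℝ] E4} (hA : ∀ u v, omega0 (A u) (A v) = omega0 u v) :
    Function.Surjective A := by
  refine LinearMap.injective_iff_surjective.1
    ((injective_iff_map_eq_zero (A : E4 →ₗ[ℝ] E4)).2 fun u (hu : A u = 0) => ?_)
  have h (i : Fin 4) : omega0 u (Pi.single i 1) = 0 := by rw [← hA, hu]; simp [omega0]
  ext i
  fin_cases i
  · simpa [omega0] using h 1
  · simpa [omega0] using h 0
  · simpa [omega0] using h 3
  · simpa [omega0] using h 2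

theorem poissonForm_comp {A : E4 →L[ℝ] E4} (hA : ∀ u v, omega0 (A u) (A v) = omega0 u v)
    (a b : E4 →L[ℝ] ℝ) : poissonForm (a.comp A) (b.comp A) = poissonForm a b := by
  obtain ⟨u, hu⟩ := exists_forall_eq_omega0 a
  obtain ⟨v, hv⟩ := exists_forall_eq_omega0 b
  obtain ⟨u, rfl⟩ := surjective_of_omega0_eq hA u
  obtain ⟨v, rfl⟩ := surjective_of_omega0_eq hA v
  rw [poissonForm_eq_omega0 hu hv, hA]
  exact poissonForm_eq_omega0 (fun x => (hu _).trans (hA _ _)) fun x => (hv _).trans (hA _ _)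

theorem pois_comp_of_symplectic {f g : E4 → ℝ} {χ : E4 → E4} {p : E4}
    (hf : DifferentiableAt ℝ f (χ p)) (hg : DifferentiableAt ℝ g (χ p))
    (hχ : DifferentiableAt ℝ χ p)
    (hω : ∀ u v, omega0 (fderiv ℝ χ p u) (fderiv ℝ χ p v) = omega0 u v) :
    pois (fun x => f (χ x)) (fun x => g (χ x)) p = pois f g (χ p) := by
  have hfχ : fderiv ℝ (fun x => f (χ x)) p = _ := fderiv_comp p hf hχ
  have hgχ : fderiv ℝ (fun x => g (χ x)) p = _ := fderiv_comp p hg hχ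
  rw [pois_eq_poissonForm, pois_eq_poissonForm, hfχ, hgχ, poissonForm_comp hω]

end PoissonBracket

section OrderOfBracket

variable {f g : E4 → ℝ} {M N : ℕ}

theorem VanishesToOrder.pd (h : VanishesToOrder (N + 1) f) (hf : ContDiff ℝ ∞ f) (i : Fin 4) :
    VanishesToOrder N (pd i f) :=
  (h.fderiv hf).clm_comp (ContinuousLinearMap.apply ℝ ℝ (Pi.single i 1))

theorem VanishesToOrder.pois (hfM : VanishesToOrder (M + 1) f) (hf : ContDiff ℝ ∞ f)
    (hgN : VanishesToOrder (N + 1) g) (hg : ContDiff ℝ ∞ g) : VanishesToOrder (M + N) (pois f g) :=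
  ((((hfM.pd hf 1).mul (hgN.pd hg 0)).sub ((hfM.pd hf 0).mul (hgN.pd hg 1))).add
    ((hfM.pd hf 3).mul (hgN.pd hg 2))).sub ((hfM.pd hf 2).mul (hgN.pd hg 3))

theorem contDiff_qmap : ContDiff ℝ ∞ qmap := by
  refine contDiff_pi.2 (Fin.forall_fin_two.2 ⟨?_, ?_⟩)
  · change ContDiff ℝ ∞ fun p : E4 => p 0 * p 1 + p 2 * p 3
    fun_prop
  · change ContDiff ℝ ∞ fun p : E4 => p 0 * p 3 - p 2 * p 1
    fun_prop

theorem homogeneousOfDegree_qmap : HomogeneousOfDegree 2 qmap := fun t p => by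
  ext i; fin_cases i <;> simp [qmap, q1, q2] <;> ring

theorem vanishesToOrder_qmap : VanishesToOrder 2 qmap :=
  homogeneousOfDegree_qmap.vanishesToOrder contDiff_qmap.continuous

theorem pois_qmap_qmap (i j : Fin 2) (p : E4) :
    pois (fun x => qmap x i) (fun x => qmap x j) p = 0 := by
  refine pois_apply_eq_zero ?_ i j
  change pois q1 q2 p = 0
  simp [pois, pd_q1, pd_q2]
  ring

theorem HomogeneousOfDegree.pois_qmap (hf : HomogeneousOfDegree N f) (hd : Differentiable ℝ f)
    (i : Fin 2) : HomogeneousOfDegree N (pois (fun x => qmap x i) f) := fun t p => by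
  have hfield : focusFocusField i (t • p) = t • focusFocusField i p := by
    ext j; fin_cases i <;> fin_cases j <;> simp [focusFocusField]
  have hcomp : HasFDerivAt (fun x => f (t • x)) ((fderiv ℝ f (t • p)).comp (t • .id ℝ E4)) p :=
    (hd (t • p)).hasFDerivAt.comp p (t • ContinuousLinearMap.id ℝ E4).hasFDerivAt
  have hsmul := ((hd p).hasFDerivAt.const_smul (t ^ N)).congr_of_eventuallyEq
    (Eventually.of_forall (hf t))
  rw [_root_.pois_qmap, _root_.pois_qmap, hfield]
  exact congrArg (fun L : E4 →L[ℝ] ℝ => L (focusFocusField i p)) (hcomp.unique hsmul)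

theorem VanishesToOrder.pois_apply {F G : E4 → E2} (hFM : VanishesToOrder (M + 1) F)
    (hF : ContDiff ℝ ∞ F) (hGN : VanishesToOrder (N + 1) G) (hG : ContDiff ℝ ∞ G) (i j : Fin 2) :
    VanishesToOrder (M + N) (_root_.pois (fun p => F p i) fun p => G p j) :=
  (vanishesToOrder_pi.1 hFM i).pois (contDiff_pi.1 hF i) (vanishesToOrder_pi.1 hGN j)
    (contDiff_pi.1 hG j)

theorem vanishesToOrder_pois_qmap_sub {r F H : E4 → E2} (hN : 2 ≤ N) (hr : ContDiff ℝ ∞ r)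
    (hF : ContDiff ℝ ∞ F) (hH : ContDiff ℝ ∞ H) (hrN : VanishesToOrder (N + 1) r)
    (hHq : VanishesToOrder 3 fun p => H p - qmap p)
    (hFH : VanishesToOrder (N + 2) fun p => F p - H p - r p)
    (hFcomm : ∀ᶠ p in 𝓝 0, ∀ i j, pois (fun p => F p i) (fun p => F p j) p = 0)
    (hHcomm : ∀ p i j, pois (fun p => H p i) (fun p => H p j) p = 0) (i j : Fin 2) :
    VanishesToOrder (N + 2) fun p => pois (fun p => qmap p i) (fun p => r p j) p -
      pois (fun p => qmap p j) (fun p => r p i) p := by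
  have hρ : VanishesToOrder (N + 1) fun p => F p - H p :=
    ((hFH.mono N.succ.le_succ).add hrN).congr fun p => sub_add_cancel _ _
  have hq := contDiff_qmap
  have hρs := hF.sub hH
  have hks := hH.sub hq
  have hes := hρs.sub hr
  refine ((((((hHq.pois_apply hks hρ hρs i j).mono (by omega)).add
    ((vanishesToOrder_qmap.pois_apply hq hFH hes i j).mono (by omega))).add
    ((hρ.pois_apply hρs hHq hks i j).mono (by omega))).add
    ((hFH.pois_apply hes vanishesToOrder_qmap hq i j).mono (by omega))).add
    ((hρ.pois_apply hρs hρ hρs i j).mono (by omega))).neg.congr' ?_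
  filter_upwards [hFcomm] with p hp
  have hFp := hp i j
  have hHp := hHcomm p i j
  have d {u : E4 → E2} (hu : ContDiff ℝ ∞ u) (i : Fin 2) :=
    (contDiff_pi.1 hu i).differentiable (by simp) p
  rw [pois_antisymm (fun p => qmap p j)]
  simp only [pois_eq_poissonForm, Pi.sub_apply, fderiv_fun_sub (d hF _) (d hH _),
    fderiv_fun_sub ((d hF _).fun_sub (d hH _)) (d hr _), fderiv_fun_sub (d hH _) (d hq _),
    map_sub, LinearMap.sub_apply] at hFp hHp ⊢
  linear_combination hHp - hFp

/-- The leading part `r` of the deviation of a commuting pair `F` from a commuting pair `H`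
satisfies the linearisation of `{F i, F j} = 0` at `qmap`. -/
theorem pois_qmap_comm_of_vanishesToOrder {r F H : E4 → E2} (hN : 3 ≤ N) (hr : ContDiff ℝ ∞ r)
    (hF : ContDiff ℝ ∞ F) (hH : ContDiff ℝ ∞ H) (hrN : HomogeneousOfDegree N r)
    (hHq : VanishesToOrder 3 fun p => H p - qmap p)
    (hFH : VanishesToOrder (N + 1) fun p => F p - H p - r p)
    (hFcomm : ∀ᶠ p in 𝓝 0, ∀ i j, pois (fun p => F p i) (fun p => F p j) p = 0)
    (hHcomm : ∀ p i j, pois (fun p => H p i) (fun p => H p j) p = 0) (i j : Fin 2) (p : E4) :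
    pois (fun p => qmap p i) (fun p => r p j) p = pois (fun p => qmap p j) (fun p => r p i) p := by
  obtain ⟨n, rfl⟩ : ∃ n, N = n + 1 := ⟨N - 1, by omega⟩
  have horder := vanishesToOrder_pois_qmap_sub (by omega) hr hF hH
    (hrN.vanishesToOrder hr.continuous) hHq hFH hFcomm hHcomm i j
  have hhom : HomogeneousOfDegree (n + 1) fun p => pois (fun p => qmap p i) (fun p => r p j) p -
      pois (fun p => qmap p j) (fun p => r p i) p := fun t p => by
    have hri (i : Fin 2) : HomogeneousOfDegree (n + 1) fun p => r p i :=
      fun t p => congrFun (hrN t p) i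
    have d (i : Fin 2) := (contDiff_pi.1 hr i).differentiable (by simp)
    simp only [(hri j).pois_qmap (d j) i t p, (hri i).pois_qmap (d i) j t p, smul_sub]
  exact sub_eq_zero.1 (hhom.eq_zero_of_vanishesToOrder_succ horder p)

end OrderOfBracket

section GradientShift

variable {E : Type*} [NormedAddCommGroup E] [NormedSpace ℝ E] (L : (E →L[ℝ] ℝ) →L[ℝ] E)
  {σ σ' : E → ℝ} {N : ℕ}

/-- Displacement of a point `p` by the image under `L` of the differential of `σ` at `p`. -/
def gradientShift (σ : E → ℝ) (p : E) : E := p + L (fderiv ℝ σ p)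

theorem contDiff_gradientShift (hσ : ContDiff ℝ ∞ σ) : ContDiff ℝ ∞ (gradientShift L σ) :=
  contDiff_id.add (L.contDiff.comp (hσ.fderiv_right (by simp)))

theorem fderiv_gradientShift_apply (hσ : ContDiff ℝ ∞ σ) (p u : E) :
    fderiv ℝ (gradientShift L σ) p u = u + L (fderiv ℝ (fderiv ℝ σ) p u) := by
  have hD : DifferentiableAt ℝ (fderiv ℝ σ) p :=
    (hσ.fderiv_right (m := ∞) (by simp)).differentiable (by simp) p
  have h : HasFDerivAt (gradientShift L σ) _ p :=
    (hasFDerivAt_id p).fun_add (L.hasFDerivAt.comp p hD.hasFDerivAt)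
  rw [h.fderiv]
  rfl

theorem vanishesToOrder_gradientShift_sub (hσ : ContDiff ℝ ∞ σ) (hσ' : ContDiff ℝ ∞ σ')
    (h : VanishesToOrder (N + 1) fun p => σ p - σ' p) :
    VanishesToOrder N fun p => gradientShift L σ p - gradientShift L σ' p := by
  refine ((h.fderiv (hσ.sub hσ')).clm_comp L).congr fun p => ?_
  rw [fderiv_fun_sub (hσ.differentiable (by simp) p) (hσ'.differentiable (by simp) p), map_sub,
    gradientShift, gradientShift, add_sub_add_left_eq_sub]

theorem vanishesToOrder_gradientShift_sub_self (hσ : ContDiff ℝ ∞ σ)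
    (h : VanishesToOrder (N + 1) σ) : VanishesToOrder N fun p => gradientShift L σ p - p :=
  ((h.fderiv hσ).clm_comp L).congr fun p => by rw [gradientShift, add_sub_cancel_left]

end GradientShift

section GeneratingFunction

variable {σ : E4 → ℝ}

/-- The momentum components `(∂σ/∂x₁, ∂σ/∂x₂)` of a covector `dσ`, placed in the `ξ` slots. -/
def momentumShift : (E4 →L[ℝ] ℝ) →L[ℝ] E4 :=
  ContinuousLinearMap.pi ![0, .apply ℝ ℝ (Pi.single 0 1), 0, .apply ℝ ℝ (Pi.single 2 1)]

/-- The position components `(∂σ/∂ξ₁, ∂σ/∂ξ₂)` of a covector `dσ`, placed in the `x` slots. -/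
def positionShift : (E4 →L[ℝ] ℝ) →L[ℝ] E4 :=
  ContinuousLinearMap.pi ![.apply ℝ ℝ (Pi.single 1 1), 0, .apply ℝ ℝ (Pi.single 3 1), 0]

/-- The source `(x, ξ + ∂σ/∂x)` of the canonical transformation with generating function
`⟨x, ξ⟩ + σ(x, ξ)` in the mixed variables (old position, new momentum). -/
abbrev generatingSource (σ : E4 → ℝ) : E4 → E4 := gradientShift momentumShift σ

/-- The target `(x + ∂σ/∂ξ, ξ)` of the canonical transformation with generating function
`⟨x, ξ⟩ + σ(x, ξ)` in the mixed variables (old position, new momentum). -/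
abbrev generatingTarget (σ : E4 → ℝ) : E4 → E4 := gradientShift positionShift σ

theorem omega0_add_momentumShift (a b : E4 →L[ℝ] ℝ) (u v : E4) :
    omega0 (u + momentumShift a) (v + momentumShift b) =
      omega0 (u + positionShift a) (v + positionShift b) + (a v - b u) := by
  rw [clm_apply_eq_sum_single a v, clm_apply_eq_sum_single b u]
  simp [omega0, momentumShift, positionShift, Fin.sum_univ_four]
  ring

theorem omega0_fderiv_generatingSource (hσ : ContDiff ℝ ∞ σ) (p u v : E4) :
    omega0 (fderiv ℝ (generatingSource σ) p u) (fderiv ℝ (generatingSource σ) p v) =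
      omega0 (fderiv ℝ (generatingTarget σ) p u) (fderiv ℝ (generatingTarget σ) p v) := by
  have hle : minSmoothness ℝ 2 ≤ ∞ :=
    minSmoothness_of_isRCLikeNormedField.trans_le (WithTop.coe_le_coe.2 le_top)
  have hsymm : fderiv ℝ (fderiv ℝ σ) p u v = fderiv ℝ (fderiv ℝ σ) p v u :=
    hσ.contDiffAt.isSymmSndFDerivAt hle u v
  simp only [fderiv_gradientShift_apply _ hσ]
  rw [omega0_add_momentumShift, hsymm, sub_self, add_zero]

theorem exists_symplectic_of_generatingFunction (hσ : ContDiff ℝ ∞ σ) (hσ3 : VanishesToOrder 3 σ) :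
    ∃ τ : E4 → E4, ContDiff ℝ ∞ τ ∧ (VanishesToOrder 2 fun p => τ p - p) ∧
      (∀ᶠ p in 𝓝 0, generatingSource σ (τ p) = p) ∧
      ∀ᶠ p in 𝓝 0, ∀ u v, omega0 (fderiv ℝ (fun p => generatingTarget σ (τ p)) p u)
        (fderiv ℝ (fun p => generatingTarget σ (τ p)) p v) = omega0 u v := by
  obtain ⟨τ, hτ, hτ2, hinv⟩ := exists_contDiff_rightInverse_of_tangent_id
    (contDiff_gradientShift momentumShift hσ) (vanishesToOrder_gradientShift_sub_self _ hσ hσ3)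
  refine ⟨τ, hτ, hτ2, hinv, ?_⟩
  filter_upwards [hinv.eventually_nhds] with p hp u v
  have hchain (L) : fderiv ℝ (fun p => gradientShift L σ (τ p)) p =
      (fderiv ℝ (gradientShift L σ) (τ p)).comp (fderiv ℝ τ p) :=
    fderiv_comp p ((contDiff_gradientShift L hσ).differentiable (by simp) _)
      (hτ.differentiable (by simp) p)
  have hid : (fderiv ℝ (generatingSource σ) (τ p)).comp (fderiv ℝ τ p) = .id ℝ E4 := by
    rw [← hchain, EventuallyEq.fderiv_eq (f := fun p => p) hp, fderiv_fun_id]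
  have hid_apply (w : E4) : fderiv ℝ (generatingSource σ) (τ p) (fderiv ℝ τ p w) = w :=
    congrArg (fun A : E4 →L[ℝ] E4 => A w) hid
  rw [hchain, ContinuousLinearMap.comp_apply, ContinuousLinearMap.comp_apply,
    ← omega0_fderiv_generatingSource hσ, hid_apply, hid_apply]

/-- There is no higher-order remainder: each monomial of `qmap` is a position times a momentum,
and only one of the two is moved by each of the shifts. -/
theorem qmap_generatingTarget_sub (σ : E4 → ℝ) (p : E4) (i : Fin 2) :
    qmap (generatingTarget σ p) i - qmap (generatingSource σ p) i =
      -pois (fun p => qmap p i) σ p := by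
  rw [pois_qmap, fderiv_apply_eq_sum_pd]
  fin_cases i <;>
  · simp [qmap, q1, q2, gradientShift, momentumShift, positionShift, focusFocusField, pd,
      Fin.sum_univ_four]
    ring

end GeneratingFunction

section NormalFormResidual

variable {F : E4 → E2} {G G' g : E2 → E2} {σ σ' s : E4 → ℝ} {M N : ℕ}

/-- The error `F ∘ generatingTarget σ - G ∘ qmap ∘ generatingSource σ`, which is
`F ∘ χ - G ∘ qmap` for the transformation `χ` generated by `σ`, pulled back to the mixed variables
so that no inverse occurs. -/
def normalFormResidual (F : E4 → E2) (G : E2 → E2) (σ : E4 → ℝ) (p : E4) : E2 :=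
  F (generatingTarget σ p) - G (qmap (generatingSource σ p))

theorem contDiff_normalFormResidual (hF : ContDiff ℝ ∞ F) (hG : ContDiff ℝ ∞ G)
    (hσ : ContDiff ℝ ∞ σ) : ContDiff ℝ ∞ (normalFormResidual F G σ) :=
  (hF.comp (contDiff_gradientShift _ hσ)).sub
    (hG.comp (contDiff_qmap.comp (contDiff_gradientShift _ hσ)))

theorem VanishesToOrder.comp_qmap (h : VanishesToOrder M g) :
    VanishesToOrder (2 * M) fun p => g (qmap p) :=
  h.comp vanishesToOrder_qmap two_ne_zero

protected theorem VanishesToOrder.gradientShift (L : (E4 →L[ℝ] ℝ) →L[ℝ] E4) (hσ : ContDiff ℝ ∞ σ)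
    (hσ3 : VanishesToOrder 3 σ) : VanishesToOrder 1 (gradientShift L σ) :=
  (vanishesToOrder_gradientShift_sub_self L hσ hσ3).of_sub_id

theorem vanishesToOrder_comp_gradientShift_sub {φ : E4 → E2} (L : (E4 →L[ℝ] ℝ) →L[ℝ] E4)
    (hφ : ContDiff ℝ ∞ φ) (hφM : VanishesToOrder M (fderiv ℝ φ))
    (hσ : ContDiff ℝ ∞ σ) (hσ3 : VanishesToOrder 3 σ)
    (hσ' : ContDiff ℝ ∞ σ') (hσ'3 : VanishesToOrder 3 σ')
    (h : VanishesToOrder (N + 1) fun p => σ p - σ' p) :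
    VanishesToOrder (M + N) fun p => φ (gradientShift L σ p) - φ (gradientShift L σ' p) :=
  hφM.comp_sub_comp (hφ.differentiable (by simp)) (hσ3.gradientShift L hσ)
    (hσ'3.gradientShift L hσ') (vanishesToOrder_gradientShift_sub L hσ hσ' h)

theorem VanishesToOrder.normalFormResidual_congr
    (hR : VanishesToOrder N (normalFormResidual F G' σ'))
    (hF : ContDiff ℝ ∞ F) (hG : ContDiff ℝ ∞ G) (hσ : ContDiff ℝ ∞ σ) (hσ3 : VanishesToOrder 3 σ)
    (hσ' : ContDiff ℝ ∞ σ') (hσ'3 : VanishesToOrder 3 σ')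
    (hσσ' : VanishesToOrder (N + 1) fun p => σ p - σ' p)
    (hGG' : VanishesToOrder M fun y => G y - G' y) (hNM : N ≤ 2 * M) :
    VanishesToOrder N (normalFormResidual F G σ) := by
  have hFG {φ : E4 → E2} (L) (hφ : ContDiff ℝ ∞ φ) :
      VanishesToOrder N fun p => φ (gradientShift L σ p) - φ (gradientShift L σ' p) := by
    simpa only [zero_add] using vanishesToOrder_comp_gradientShift_sub L hφ
      (vanishesToOrder_zero_of_continuous (hφ.continuous_fderiv (by simp))) hσ hσ3 hσ' hσ'3 hσσ'
  have hG' := (hGG'.comp_qmap.mono hNM).comp_one (hσ'3.gradientShift momentumShift hσ')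
  refine (((hR.add (hFG positionShift hF)).sub
    (hFG momentumShift (hG.comp contDiff_qmap))).sub hG').congr fun p => ?_
  simp only [normalFormResidual, Function.comp_apply]
  abel

/-- Newton step: correcting `(σ, G)` by a solution `(s, g)` of the homological equation removes
the leading part `r` of the residual. -/
theorem vanishesToOrder_normalFormResidual_add {r : E4 → E2} (hN : 3 ≤ N) (hF : ContDiff ℝ ∞ F)
    (hF3 : VanishesToOrder 3 fun p => F p - qmap p) (hG : ContDiff ℝ ∞ G)
    (hG2 : VanishesToOrder 2 fun y => G y - y) (hσ : ContDiff ℝ ∞ σ) (hσ3 : VanishesToOrder 3 σ)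
    (hs : ContDiff ℝ ∞ s) (hsN : VanishesToOrder N s) (hg : ContDiff ℝ ∞ g)
    (hgN : VanishesToOrder N fun p => g (qmap p))
    (hR : VanishesToOrder (N + 1) fun p => normalFormResidual F G σ p - r p)
    (hr : ∀ p i, r p i = g (qmap p) i + pois (fun p => qmap p i) s p) :
    VanishesToOrder (N + 1) (normalFormResidual F (G + g) (σ + s)) := by
  obtain ⟨n, rfl⟩ : ∃ n, N = n + 1 := ⟨N - 1, by omega⟩
  have hσ' : ContDiff ℝ ∞ (σ + s) := hσ.add hs
  have hσ'3 : VanishesToOrder 3 (σ + s) := hσ3.add (hsN.mono hN)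
  have hσσ' : VanishesToOrder (n + 1) fun p => (σ + s) p - σ p :=
    hsN.congr fun p => (add_sub_cancel_left (σ p) (s p)).symm
  have hquad {φ : E4 → E2} (L) (hφ : ContDiff ℝ ∞ φ) (hφ3 : VanishesToOrder 3 φ) :
      VanishesToOrder (n + 2) fun p => φ (gradientShift L (σ + s) p) - φ (gradientShift L σ p) :=
    (vanishesToOrder_comp_gradientShift_sub L hφ (hφ3.fderiv hφ) hσ' hσ'3 hσ hσ3 hσσ').mono
      (by omega)
  have hgq : ContDiff ℝ ∞ fun p => g (qmap p) := hg.comp contDiff_qmap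
  have hg' := (hgN.fderiv hgq).comp_sub_comp (hgq.differentiable (by simp))
    (hσ'3.gradientShift momentumShift hσ') vanishesToOrder_id
    (vanishesToOrder_gradientShift_sub_self momentumShift hσ' hσ'3)
  refine (((hR.add (hquad positionShift (hF.sub contDiff_qmap) hF3)).sub
    (hquad momentumShift ((hG.comp contDiff_qmap).sub contDiff_qmap)
      (hG2.comp_qmap.mono (by norm_num)))).sub hg').congr fun p => ?_
  ext i
  have hσs := qmap_generatingTarget_sub (σ + s) p i
  have hσi := qmap_generatingTarget_sub σ p i
  have hadd : pois (fun p => qmap p i) (σ + s) p =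
      pois (fun p => qmap p i) σ p + pois (fun p => qmap p i) s p := by
    rw [pois_qmap, pois_qmap, pois_qmap, fderiv_add (hσ.differentiable (by simp) p)
      (hs.differentiable (by simp) p), add_apply]
  simp only [normalFormResidual, Function.comp_apply, Pi.add_apply, Pi.sub_apply, hr]
  linear_combination hσi - hσs + hadd

end NormalFormResidual

section FormalNormalForm

variable {F : E4 → E2} {G : E2 → E2} {σ : E4 → ℝ} {N : ℕ}

/-- The transformation generated by `σ` brings `F` to the normal form `G ∘ qmap` up to an error
of order `N`. -/
structure IsNormalFormModulo (F : E4 → E2) (N : ℕ) (σ : E4 → ℝ) (G : E2 → E2) : Prop where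
  contDiff_generator : ContDiff ℝ ∞ σ
  contDiff_target : ContDiff ℝ ∞ G
  vanishesToOrder_generator : VanishesToOrder 3 σ
  vanishesToOrder_target_sub_id : VanishesToOrder 2 fun y => G y - y
  vanishesToOrder_residual : VanishesToOrder N (normalFormResidual F G σ)

theorem isNormalFormModulo_zero_id (hF3 : VanishesToOrder 3 fun p => F p - qmap p) :
    IsNormalFormModulo F 3 0 id where
  contDiff_generator := contDiff_const
  contDiff_target := contDiff_id
  vanishesToOrder_generator := isBigO_zero _ _
  vanishesToOrder_target_sub_id := (isBigO_zero _ _).congr_left fun y => (sub_self y).symm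
  vanishesToOrder_residual := hF3.congr fun p => by
    simp [normalFormResidual, gradientShift]

/-- In the coordinates of the transformation generated by `σ` the residual has the same leading
part `r`, and there it is the difference of two commuting pairs. -/
theorem IsNormalFormModulo.pois_qmap_comm {r : E4 → E2} (h : IsNormalFormModulo F N σ G)
    (hN : 3 ≤ N) (hF : ContDiff ℝ ∞ F)
    (hcomm : ∀ᶠ p in 𝓝 0, pois (fun p => F p 0) (fun p => F p 1) p = 0)
    (hr : ContDiff ℝ ∞ r) (hrN : HomogeneousOfDegree N r)
    (hR : VanishesToOrder (N + 1) fun p => normalFormResidual F G σ p - r p) (i j : Fin 2)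
    (p : E4) :
    pois (fun p => qmap p i) (fun p => r p j) p = pois (fun p => qmap p j) (fun p => r p i) p := by
  obtain ⟨hσ, hG, hσ3, hG2, -⟩ := h
  obtain ⟨τ, hτ, hτ2, hinv, hω⟩ := exists_symplectic_of_generatingFunction hσ hσ3
  have hχ : ContDiff ℝ ∞ fun p => generatingTarget σ (τ p) :=
    (contDiff_gradientShift positionShift hσ).comp hτ
  have hχ0 : Tendsto (fun p => generatingTarget σ (τ p)) (𝓝 0) (𝓝 0) :=
    ((hσ3.gradientShift positionShift hσ).comp_one hτ2.of_sub_id).tendsto one_ne_zero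
  have hFi (i : Fin 2) : Differentiable ℝ fun p => F p i :=
    (contDiff_pi.1 hF i).differentiable (by simp)
  have hGi (i : Fin 2) : Differentiable ℝ fun y => G y i :=
    (contDiff_pi.1 hG i).differentiable (by simp)
  refine pois_qmap_comm_of_vanishesToOrder hN hr (hF.comp hχ) (hG.comp contDiff_qmap) hrN
    (hG2.comp_qmap.mono (by norm_num)) ?_ ?_ (fun p i j => ?_) i j p
  · obtain ⟨n, rfl⟩ : ∃ n, N = n + 1 := ⟨N - 1, by omega⟩
    have hrτ := ((hrN.vanishesToOrder hr.continuous).fderiv hr).comp_sub_comp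
      (hr.differentiable (by simp)) hτ2.of_sub_id vanishesToOrder_id hτ2
    refine ((hR.comp_one hτ2.of_sub_id).add hrτ).congr' ?_
    filter_upwards [hinv] with p hp
    rw [normalFormResidual, hp, Function.comp_apply, Function.comp_apply, sub_add_sub_cancel]
  · filter_upwards [hω, hχ0.eventually hcomm] with p hωp hFp i j
    exact (pois_comp_of_symplectic (hFi i _) (hFi j _) (hχ.differentiable (by simp) p)
      hωp).trans (pois_apply_eq_zero hFp i j)
  · exact pois_comp_eq_zero (contDiff_qmap.differentiable (by simp) p) (hGi i _) (hGi j _)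
      fun i j => pois_qmap_qmap i j p

theorem IsNormalFormModulo.exists_succ (h : IsNormalFormModulo F N σ G) (hN : 3 ≤ N)
    (hF : ContDiff ℝ ∞ F) (hF3 : VanishesToOrder 3 fun p => F p - qmap p)
    (hcomm : ∀ᶠ p in 𝓝 0, pois (fun p => F p 0) (fun p => F p 1) p = 0) :
    ∃ (s : E4 → ℝ) (g : E2 → E2), ContDiff ℝ ∞ s ∧ HomogeneousOfDegree N s ∧ ContDiff ℝ ∞ g ∧
      HomogeneousOfDegree ((N + 1) / 2) g ∧ IsNormalFormModulo F (N + 1) (σ + s) (G + g) := by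
  have hR := contDiff_normalFormResidual hF h.contDiff_target h.contDiff_generator
  have hlead := h.vanishesToOrder_residual.sub_taylorTerm hR
  have hr := contDiff_taylorTerm (normalFormResidual F G σ) N
  have hrN := homogeneousOfDegree_taylorTerm (normalFormResidual F G σ) N
  obtain ⟨s, g, hs, hsN, hg, hgN, hsol⟩ := exists_homological_solution hr hrN
    (h.pois_qmap_comm hN hF hcomm hr hrN hlead)
  have hsN' := hsN.vanishesToOrder hs.continuous
  have hgN' := hgN.vanishesToOrder hg.continuous
  exact ⟨s, g, hs, hsN, hg, hgN,
    { contDiff_generator := h.contDiff_generator.add hs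
      contDiff_target := h.contDiff_target.add hg
      vanishesToOrder_generator := h.vanishesToOrder_generator.add (hsN'.mono hN)
      vanishesToOrder_target_sub_id := (h.vanishesToOrder_target_sub_id.add
        (hgN'.mono (by omega))).congr fun y => sub_add_eq_add_sub (G y) y (g y)
      vanishesToOrder_residual := vanishesToOrder_normalFormResidual_add hN hF hF3 h.contDiff_target
        h.vanishesToOrder_target_sub_id h.contDiff_generator h.vanishesToOrder_generator hs hsN' hg
        (hgN'.comp_qmap.mono (by omega)) hlead hsol }⟩

theorem exists_forall_add_sum_range {V : Type*} [AddCommMonoid V] {P Q : ℕ → V → Prop} {x : V}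
    (hx : P 0 x) (hstep : ∀ n x, P n x → ∃ y, Q n y ∧ P (n + 1) (x + y)) :
    ∃ y : ℕ → V, (∀ n, Q n (y n)) ∧ ∀ n, P n (x + ∑ k ∈ Finset.range n, y k) := by
  choose! y hQ hP using hstep
  let X : ℕ → V := Nat.rec x fun n z => z + y n z
  have hX (n : ℕ) : P n (X n) := Nat.rec hx (fun n ih => hP n (X n) ih) n
  have hsum (n : ℕ) : X n = x + ∑ k ∈ Finset.range n, y k (X k) := by
    induction n with
    | zero => rw [Finset.sum_range_zero, add_zero]; rfl
    | succ n ih => rw [Finset.sum_range_succ, ← add_assoc, ← ih]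
  exact ⟨fun n => y n (X n), fun n => hQ n (X n) (hX n), fun n => hsum n ▸ hX n⟩

theorem exists_forall_isNormalFormModulo (hF : ContDiff ℝ ∞ F)
    (hF3 : VanishesToOrder 3 fun p => F p - qmap p)
    (hcomm : ∀ᶠ p in 𝓝 0, pois (fun p => F p 0) (fun p => F p 1) p = 0) :
    ∃ (σ : E4 → ℝ) (G : E2 → E2), ∀ N, IsNormalFormModulo F N σ G := by
  obtain ⟨y, hy, hyF⟩ := exists_forall_add_sum_range (V := (E4 → ℝ) × (E2 → E2))
    (P := fun n x => IsNormalFormModulo F (n + 3) x.1 x.2)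
    (Q := fun n x => ContDiff ℝ ∞ x.1 ∧ HomogeneousOfDegree (n + 3) x.1 ∧
      ContDiff ℝ ∞ x.2 ∧ HomogeneousOfDegree ((n + 4) / 2) x.2) (x := (0, id))
    (isNormalFormModulo_zero_id hF3) fun n x hx => by
      obtain ⟨s, g, hs, hsN, hg, hgN, hsg⟩ := hx.exists_succ (by omega) hF hF3 hcomm
      exact ⟨(s, g), ⟨hs, hsN, hg, hgN⟩, hsg⟩
  obtain ⟨σ, hσ, hσsum⟩ := exists_contDiff_vanishesToOrder_sub_sum (fun k => (hy k).1)
    (fun k => (hy k).2.1) (tendsto_add_atTop_nat 3)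
  obtain ⟨γ, hγ, hγsum⟩ := exists_contDiff_vanishesToOrder_sub_sum (fun k => (hy k).2.2.1)
    (fun k => (hy k).2.2.2)
    ((Nat.tendsto_div_const_atTop two_ne_zero).comp (tendsto_add_atTop_nat 4))
  have hσ3 : VanishesToOrder 3 σ := by simpa using hσsum 0 3 (by omega)
  have hG2 : VanishesToOrder 2 fun y => (id + γ : E2 → E2) y - y := by
    simpa using hγsum 0 2 fun k _ => by omega
  refine ⟨σ, id + γ, fun N => ⟨hσ, contDiff_id.add hγ, hσ3, hG2, ?_⟩⟩
  have hR := (hyF N).vanishesToOrder_residual.mono (Nat.le_add_right N 3)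
  refine hR.normalFormResidual_congr (M := (N + 4) / 2) hF (contDiff_id.add hγ) hσ hσ3
    (hyF N).contDiff_generator (hyF N).vanishesToOrder_generator ?_ ?_ (by omega)
  · refine (hσsum N (N + 1) (by omega)).congr fun p => ?_
    simp [Prod.fst_sum, Finset.sum_apply]
  · refine (hγsum N ((N + 4) / 2) fun k hk => Nat.div_le_div_right (by omega)).congr fun y => ?_
    simp [Prod.snd_sum, Finset.sum_apply]

theorem exists_normalForm_of_vanishesToOrder_sub_qmap (hF : ContDiff ℝ ∞ F)
    (hF3 : VanishesToOrder 3 fun p => F p - qmap p)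
    (hcomm : ∀ᶠ p in 𝓝 0, pois (fun p => F p 0) (fun p => F p 1) p = 0) :
    ∃ (χ : E4 → E4) (G : E2 → E2), ContDiff ℝ ∞ χ ∧ (VanishesToOrder 2 fun p => χ p - p) ∧
      (∀ᶠ p in 𝓝 0, ∀ u v, omega0 (fderiv ℝ χ p u) (fderiv ℝ χ p v) = omega0 u v) ∧
      ContDiff ℝ ∞ G ∧ (VanishesToOrder 2 fun y => G y - y) ∧
      ∀ N, VanishesToOrder N fun p => F (χ p) - G (qmap p) := by
  obtain ⟨σ, G, h⟩ := exists_forall_isNormalFormModulo hF hF3 hcomm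
  obtain ⟨hσ, hG, hσ3, hG2, -⟩ := h 0
  obtain ⟨τ, hτ, hτ2, hinv, hω⟩ := exists_symplectic_of_generatingFunction hσ hσ3
  refine ⟨fun p => generatingTarget σ (τ p), G, (contDiff_gradientShift positionShift hσ).comp hτ,
    ?_, hω, hG, hG2, fun N => ?_⟩
  · exact (((vanishesToOrder_gradientShift_sub_self positionShift hσ hσ3).comp_one
      hτ2.of_sub_id).add hτ2).congr fun p => sub_add_sub_cancel _ _ _
  · refine ((h N).vanishesToOrder_residual.comp_one hτ2.of_sub_id).congr' ?_
    filter_upwards [hinv] with p hp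
    rw [normalFormResidual, hp]

end FormalNormalForm

theorem vanishesToOrder_of_contDiffOn_of_iteratedFDeriv_eq_zero {E F : Type*}
    [NormedAddCommGroup E] [NormedSpace ℝ E] [FiniteDimensional ℝ E] [NormedAddCommGroup F]
    [NormedSpace ℝ F] [CompleteSpace F] {g : E → F} {u : Set E} {N : ℕ} (hu : u ∈ 𝓝 0)
    (hg : ContDiffOn ℝ ∞ g u) (h : ∀ k < N, iteratedFDeriv ℝ k g 0 = 0) :
    VanishesToOrder N g := by
  obtain ⟨g', hg', hgg'⟩ := exists_contDiff_eventuallyEq hu hg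
  refine (vanishesToOrder_of_iteratedFDeriv_eq_zero hg' fun k hk => ?_).congr' hgg'
  rw [(hgg'.iteratedFDeriv ℝ k).self_of_nhds, h k hk]

theorem exists_continuousLinearEquiv_eq_mulVec {ι : Type*} [Fintype ι] [DecidableEq ι]
    {M : Matrix ι ι ℝ} (hM : M.det ≠ 0) :
    ∃ A : (ι → ℝ) ≃L[ℝ] (ι → ℝ), ∀ v, A v = M.mulVec v :=
  ⟨(M.toLin'.equivOfDetNeZero (by rwa [LinearMap.det_toLin'])).toContinuousLinearEquiv,
    fun _ => rfl⟩

section LinearReduction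

variable {F : E4 → E2} {A : E2 ≃L[ℝ] E2}

theorem exists_normalForm_of_vanishesToOrder_sub (hF : ContDiff ℝ ∞ F)
    (hF3 : VanishesToOrder 3 fun p => F p - A (qmap p))
    (hcomm : ∀ᶠ p in 𝓝 0, pois (fun p => F p 0) (fun p => F p 1) p = 0) :
    ∃ (χ : E4 → E4) (G : E2 → E2), ContDiff ℝ ∞ χ ∧ (VanishesToOrder 2 fun p => χ p - p) ∧
      (∀ᶠ p in 𝓝 0, ∀ u v, omega0 (fderiv ℝ χ p u) (fderiv ℝ χ p v) = omega0 u v) ∧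
      ContDiff ℝ ∞ G ∧ (VanishesToOrder 2 fun y => G y - A y) ∧
      ∀ N, VanishesToOrder N fun p => F (χ p) - G (qmap p) := by
  have hA (i : Fin 2) : Differentiable ℝ fun y => A.symm y i :=
    differentiable_pi.1 A.symm.differentiable i
  obtain ⟨χ, G, hχ, hχ2, hω, hG, hG2, hflat⟩ :=
    exists_normalForm_of_vanishesToOrder_sub_qmap (F := fun p => A.symm (F p))
      (A.symm.contDiff.comp hF)
      ((hF3.clm_comp (A.symm : E2 →L[ℝ] E2)).congr fun p => by simp)
      (hcomm.mono fun p hp => pois_comp_eq_zero (hF.differentiable (by simp) p) (hA 0 _) (hA 1 _)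
        (pois_apply_eq_zero hp))
  refine ⟨χ, fun y => A (G y), hχ, hχ2, hω, A.contDiff.comp hG, ?_, fun N => ?_⟩
  · exact (hG2.clm_comp (A : E2 →L[ℝ] E2)).congr fun y => by simp
  · exact ((hflat N).clm_comp (A : E2 →L[ℝ] E2)).congr fun p => by simp

theorem exists_normalForm_of_contDiffOn {U : Set E4} (hU : U ∈ 𝓝 0) (hF : ContDiffOn ℝ ∞ F U)
    (hF3 : VanishesToOrder 3 fun p => F p - A (qmap p))
    (hcomm : ∀ᶠ p in 𝓝 0, pois (fun p => F p 0) (fun p => F p 1) p = 0) :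
    ∃ (χ : E4 → E4) (G : E2 → E2), ContDiff ℝ ∞ χ ∧ (VanishesToOrder 2 fun p => χ p - p) ∧
      (∀ᶠ p in 𝓝 0, ∀ u v, omega0 (fderiv ℝ χ p u) (fderiv ℝ χ p v) = omega0 u v) ∧
      ContDiff ℝ ∞ G ∧ (VanishesToOrder 2 fun y => G y - A y) ∧
      flatAt (fun p => F (χ p) - G (qmap p)) 0 := by
  obtain ⟨F', hF', hFF'⟩ := exists_contDiff_eventuallyEq hU hF
  have hcomm' : ∀ᶠ p in 𝓝 0, pois (fun p => F' p 0) (fun p => F' p 1) p = 0 := by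
    filter_upwards [hFF'.eventually_nhds, hcomm] with p hp hFp
    have hi (i : Fin 2) : fderiv ℝ (fun p => F' p i) p = fderiv ℝ (fun p => F p i) p :=
      EventuallyEq.fderiv_eq (hp.mono fun x hx => congrFun hx i)
    simpa only [pois, pd, hi] using hFp
  obtain ⟨χ, G, hχ, hχ2, hω, hG, hG2, hflat⟩ :=
    exists_normalForm_of_vanishesToOrder_sub (A := A) hF'
      (hF3.congr' (hFF'.symm.sub EventuallyEq.rfl)) hcomm'
  refine ⟨χ, G, hχ, hχ2, hω, hG, hG2, fun n => ?_⟩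
  have heq : (fun p => F (χ p) - G (qmap p)) =ᶠ[𝓝 0] fun p => F' (χ p) - G (qmap p) := by
    filter_upwards [(hχ2.of_sub_id.tendsto one_ne_zero).eventually hFF'] with p hp
    rw [hp]
  rw [(heq.iteratedFDeriv ℝ n).self_of_nhds]
  exact (hflat (n + 1)).iteratedFDeriv_eq_zero
    ((hF'.comp hχ).sub (hG.comp contDiff_qmap)) n.lt_succ_self

end LinearReduction

/-- **Smooth Birkhoff normal form modulo a flat term.**
If `F = (f₁,f₂)` commute and have independent focus-focus quadratic parts at `0`,
then there exist a local symplectomorphism `χ` of `(ℝ⁴,0)` tangent to the identity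
and a smooth local diffeomorphism `G̃` of `(ℝ²,0)` with derivative `((a,b),(c,d))`
at `0`, such that `F∘χ − G̃∘(q₁,q₂)` is flat at the origin. -/
theorem smooth_birkhoff_modulo_flat
    (f1 f2 : E4 → ℝ) (U : Set E4) (hUopen : IsOpen U) (hU0 : (0:E4) ∈ U)
    (hs1 : ContDiffOn ℝ (⊤ : ℕ∞) f1 U) (hs2 : ContDiffOn ℝ (⊤ : ℕ∞) f2 U)
    (hcomm : ∀ p ∈ U, pois f1 f2 p = 0)
    (a b c d : ℝ) (hdet : a * d - b * c ≠ 0)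
    (hO1 : ∀ n < 3, iteratedFDeriv ℝ n (fun p => f1 p - (a * q1 p + b * q2 p)) 0 = 0)
    (hO2 : ∀ n < 3, iteratedFDeriv ℝ n (fun p => f2 p - (c * q1 p + d * q2 p)) 0 = 0) :
    ∃ (χ : E4 → E4) (G : E2 → E2) (V : Set E4) (W : Set E2),
      IsOpen V ∧ (0:E4) ∈ V ∧ ContDiffOn ℝ (⊤ : ℕ∞) χ V ∧ Set.InjOn χ V ∧
      χ 0 = 0 ∧ fderiv ℝ χ 0 = ContinuousLinearMap.id ℝ E4 ∧
      (∀ p ∈ V, ∀ u v : E4,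
        omega0 (fderiv ℝ χ p u) (fderiv ℝ χ p v) = omega0 u v) ∧
      IsOpen W ∧ (0:E2) ∈ W ∧ ContDiffOn ℝ (⊤ : ℕ∞) G W ∧ Set.InjOn G W ∧ G 0 = 0 ∧
      (∀ v : E2, fderiv ℝ G 0 v = ![a * v 0 + b * v 1, c * v 0 + d * v 1]) ∧
      flatAt (fun p : E4 => (![f1 (χ p), f2 (χ p)] : E2) - G (qmap p)) 0 := by
  have hU : U ∈ 𝓝 0 := hUopen.mem_nhds hU0
  obtain ⟨A, hA⟩ := exists_continuousLinearEquiv_eq_mulVec (M := !![a, b; c, d])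
    (by rwa [Matrix.det_fin_two_of])
  have hA' (v : E2) : A v = ![a * v 0 + b * v 1, c * v 0 + d * v 1] := by
    rw [hA, Matrix.mulVec_fin_two]; rfl
  have hF : ContDiffOn ℝ ∞ (fun p => (![f1 p, f2 p] : E2)) U :=
    contDiffOn_pi.2 (Fin.forall_fin_two.2 ⟨hs1, hs2⟩)
  have hF3 : VanishesToOrder 3 fun p => (![f1 p, f2 p] : E2) - A (qmap p) := by
    refine vanishesToOrder_pi.2 fun i => vanishesToOrder_of_contDiffOn_of_iteratedFDeriv_eq_zero hU
      (contDiffOn_pi.1 (hF.sub (A.contDiff.comp contDiff_qmap).contDiffOn) i) ?_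
    fin_cases i
    exacts [by simpa [hA', qmap] using hO1, by simpa [hA', qmap] using hO2]
  obtain ⟨χ, G, hχ, hχ2, hω, hG, hG2, hflat⟩ := exists_normalForm_of_contDiffOn hU hF hF3
    (mem_of_superset hU hcomm)
  obtain ⟨V, hV, hV0, hχV⟩ := exists_isOpen_injOn_of_vanishesToOrder_sub (.refl ℝ E4) hχ hχ2
  obtain ⟨V', hV', hV'open, hV'0⟩ := mem_nhds_iff.1 hω
  obtain ⟨W, hW, hW0, hGW⟩ := exists_isOpen_injOn_of_vanishesToOrder_sub A hG hG2
  refine ⟨χ, G, V ∩ V', W, hV.inter hV'open, ⟨hV0, hV'0⟩, hχ.contDiffOn, hχV.mono inter_subset_left,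
    hχ2.of_sub_id.apply_eq_zero one_ne_zero, ?_, fun p hp => hV' hp.2, hW, hW0, hG.contDiffOn, hGW,
    by simpa using hG2.apply_eq_zero two_ne_zero, fun v => ?_, hflat⟩
  · exact HasFDerivAt.fderiv (hχ2.hasFDerivAt_of_sub_clm (L := .id ℝ E4))
  · rw [(hG2.hasFDerivAt_of_sub_clm (L := (A : E2 →L[ℝ] E2))).fderiv, ← hA']; rfl
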